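/- arXiv:1209.3948 — 2 statements merged into one kernel-verified Lean document; each statement's English description precedes it below -/
import Mathlib

section
/- Fix n ≥ 1 and 1 ≤ j ≤ n. There exists a constant C > 0, depending only on n, such that for every p ∈ (1, ∞), every d ≥ 1, every Lipschitz function f : ℝⁿ → ℝ with |f(ξ) − f(ξ̃)| ≤ ‖ξ − ξ̃‖₂ for all ξ, ξ̃ ∈ ℝⁿ, every map λ : {1,…,d} → ℝⁿ, and every matrix y ∈ M_d(ℂ), the matrix z ∈ M_d(ℂ) defined entrywise by z_{ik} = m_{ik}·y_{ik}, where m_{ik} = (f(λ(i)) − f(λ(k)))·(λ(i)_j − λ(k)_j)/‖λ(i) − λ(k)‖₂² if λ(i) ≠ λ(k) and m_{ik} = 0 if λ(i) = λ(k), satisfies ‖z‖_p ≤ C·(p²/(p−1))·‖y‖_p. -/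
open Finset Matrix

/-- The singular values of a square complex matrix: the square roots of the eigenvalues of
the positive semidefinite Hermitian matrix `Mᴴ * M`. -/
noncomputable def singularValues {d : ℕ} (M : Matrix (Fin d) (Fin d) ℂ) : Fin d → ℝ :=
  fun i => Real.sqrt ((Matrix.isHermitian_conjTranspose_mul_self M).eigenvalues i)

/-- The Schatten `p`-norm of a square complex matrix: `(∑ᵢ σᵢ(M)^p)^(1/p)`. -/
noncomputable def schattenNorm {d : ℕ} (p : ℝ) (M : Matrix (Fin d) (Fin d) ℂ) : ℝ :=
  (∑ i, singularValues M i ^ p) ^ (1 / p)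

namespace SMB
open scoped ComplexOrder

/-- unitary -/
def IsU {d : ℕ} (U : Matrix (Fin d) (Fin d) ℂ) : Prop := Uᴴ * U = 1

lemma IsU.right {d : ℕ} {U : Matrix (Fin d) (Fin d) ℂ} (h : IsU U) : U * Uᴴ = 1 :=
  mul_eq_one_comm.mp h

lemma IsU.ct {d : ℕ} {U : Matrix (Fin d) (Fin d) ℂ} (h : IsU U) : IsU Uᴴ := by
  unfold IsU; rw [conjTranspose_conjTranspose]; exact h.right

lemma IsU.mul {d : ℕ} {U V : Matrix (Fin d) (Fin d) ℂ} (h : IsU U) (h' : IsU V) : IsU (U * V) := by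
  unfold IsU at *
  rw [conjTranspose_mul, Matrix.mul_assoc, ← Matrix.mul_assoc Uᴴ, h, Matrix.one_mul, h']

lemma isU_one {d : ℕ} : IsU (1 : Matrix (Fin d) (Fin d) ℂ) := by simp [IsU]

noncomputable def dg {d : ℕ} (e : Fin d → ℝ) : Matrix (Fin d) (Fin d) ℂ :=
  diagonal (fun i => (e i : ℂ))

lemma dg_mul {d : ℕ} (e f : Fin d → ℝ) : dg e * dg f = dg (fun i => e i * f i) := by
  simp [dg]

lemma dg_ct {d : ℕ} (e : Fin d → ℝ) : (dg e)ᴴ = dg e := by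
  simp [dg, diagonal_conjTranspose, Pi.star_def]

/-- spectral theorem -/
lemma herm_diag {d : ℕ} {A : Matrix (Fin d) (Fin d) ℂ} (hA : A.IsHermitian) :
    ∃ U, IsU U ∧ A = U * dg hA.eigenvalues * Uᴴ := by
  refine ⟨hA.eigenvectorUnitary, ?_, ?_⟩
  · have := (Matrix.mem_unitaryGroup_iff').mp hA.eigenvectorUnitary.2
    simpa [IsU, star_eq_conjTranspose] using this
  · conv_lhs => rw [hA.spectral_theorem]
    rfl

lemma sv_nonneg {d : ℕ} (A : Matrix (Fin d) (Fin d) ℂ) (i) : 0 ≤ singularValues A i :=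
  Real.sqrt_nonneg _

lemma sv_sq {d : ℕ} (A : Matrix (Fin d) (Fin d) ℂ) (i) :
    singularValues A i ^ 2 = (Matrix.isHermitian_conjTranspose_mul_self A).eigenvalues i := by
  unfold singularValues
  exact Real.sq_sqrt ((Matrix.posSemidef_conjTranspose_mul_self A).eigenvalues_nonneg i)

lemma charpoly_dg {d : ℕ} {U : Matrix (Fin d) (Fin d) ℂ} (hU : IsU U) (e : Fin d → ℝ) :
    (U * dg e * Uᴴ).charpoly.roots = Multiset.map (fun i => (e i : ℂ)) Finset.univ.val := by
  rw [charpoly_mul_comm, ← Matrix.mul_assoc, hU, Matrix.one_mul]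
  rw [dg, charpoly_diagonal]
  rw [Polynomial.roots_prod]
  · simp
  · exact Finset.prod_ne_zero_iff.mpr fun i _ => Polynomial.X_sub_C_ne_zero _

lemma eig_eq {d : ℕ} {A : Matrix (Fin d) (Fin d) ℂ} (hA : A.IsHermitian)
    {U : Matrix (Fin d) (Fin d) ℂ} (hU : IsU U) (e : Fin d → ℝ) (h : A = U * dg e * Uᴴ)
    : Multiset.map hA.eigenvalues Finset.univ.val = Multiset.map e Finset.univ.val := by
  have h1 := hA.roots_charpoly_eq_eigenvalues
  have h2 := charpoly_dg hU e
  rw [← h, h1] at h2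
  have := congrArg (Multiset.map Complex.re) h2
  simpa [Multiset.map_map, Function.comp_def] using this

lemma sv_sum {d : ℕ} {A : Matrix (Fin d) (Fin d) ℂ} {U V : Matrix (Fin d) (Fin d) ℂ}
    (hU : IsU U) (hV : IsU V) (e : Fin d → ℝ) (he : ∀ i, 0 ≤ e i) (h : A = U * dg e * V)
    {β : Type*} [AddCommMonoid β] (F : ℝ → β) :
    ∑ i, F (singularValues A i) = ∑ i, F (e i) := by
  have hA : Aᴴ * A = Vᴴ * dg (fun i => e i * e i) * (Vᴴ)ᴴ := by
    rw [h, ← dg_mul]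
    simp only [conjTranspose_mul, conjTranspose_conjTranspose, dg_ct]
    calc _ = Vᴴ * (dg e * (Uᴴ * U) * dg e) * V := by simp only [Matrix.mul_assoc]
      _ = _ := by rw [hU, Matrix.mul_one]
  have h1 := eig_eq (Matrix.isHermitian_conjTranspose_mul_self A) hV.ct _ hA
  have h2 := congrArg (fun s => (Multiset.map (fun x => F (Real.sqrt x)) s).sum) h1
  simp only [Multiset.map_map, Function.comp_def] at h2
  have h3 : ∀ i, Real.sqrt (e i * e i) = e i := fun i => Real.sqrt_mul_self (he i)
  simp only [h3] at h2
  exact h2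

lemma exists_svd {d : ℕ} (A : Matrix (Fin d) (Fin d) ℂ) :
    ∃ U V, IsU U ∧ IsU V ∧ A = U * dg (singularValues A) * V := by
  classical
  obtain ⟨W, hW, hAW⟩ := herm_diag (Matrix.isHermitian_conjTranspose_mul_self A)
  set s := singularValues A with hs
  have hB : (A * W)ᴴ * (A * W) = dg (fun i => s i ^ 2) := by
    have hs2 : (Matrix.isHermitian_conjTranspose_mul_self A).eigenvalues = fun i => s i ^ 2 :=
      funext fun i => (sv_sq A i).symm
    rw [hs2] at hAW
    rw [conjTranspose_mul, Matrix.mul_assoc, ← Matrix.mul_assoc Aᴴ, hAW]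
    calc _ = (Wᴴ * W) * dg (fun i => s i ^ 2) * (Wᴴ * W) := by simp only [Matrix.mul_assoc]
      _ = _ := by rw [hW]; simp
  have hin : ∀ i k, ∑ l, star ((A * W) l i) * (A * W) l k = if i = k then ((s i ^ 2 : ℝ) : ℂ) else 0 := by
    intro i k
    have := congrFun (congrFun hB i) k
    rw [Matrix.mul_apply] at this
    simp only [conjTranspose_apply] at this
    rw [this, dg, diagonal_apply]
  let v : Fin d → EuclideanSpace ℂ (Fin d) := fun i => WithLp.toLp 2 (fun l => ((s i : ℂ))⁻¹ * (A * W) l i)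
  let S : Set (Fin d) := {i | s i ≠ 0}
  have hv : Orthonormal ℂ (S.domRestrict v) := by
    rw [orthonormal_iff_ite]
    rintro ⟨i, hi⟩ ⟨k, hk⟩
    have e1 : inner ℂ (v i) (v k) = ((s i : ℂ))⁻¹ * ((s k : ℂ))⁻¹ * ∑ l, star ((A * W) l i) * (A * W) l k := by
      simp only [v, PiLp.inner_apply, RCLike.inner_apply, map_mul, Finset.mul_sum, map_inv₀, Complex.conj_ofReal]
      refine Finset.sum_congr rfl fun l _ => ?_
      simp only [Complex.star_def]; ring
    change inner ℂ (v i) (v k) = _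
    rw [e1, hin]
    simp only [Subtype.mk.injEq]
    have hi' : (s i : ℂ) ≠ 0 := by exact_mod_cast hi
    split_ifs with h
    · subst h; push_cast; field_simp
    · simp
  obtain ⟨b, hb⟩ := hv.exists_orthonormalBasis_extension_of_card_eq (by simp)
  let U : Matrix (Fin d) (Fin d) ℂ := Matrix.of fun l i => b i l
  have hU : IsU U := by
    ext i k
    rw [Matrix.mul_apply]
    have := orthonormal_iff_ite.mp b.orthonormal i k
    simp only [PiLp.inner_apply, RCLike.inner_apply] at this
    simp only [U, conjTranspose_apply, of_apply, Matrix.one_apply, ← this]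
    refine Finset.sum_congr rfl fun l _ => ?_
    simp [mul_comm]
  refine ⟨U, Wᴴ, hU, hW.ct, ?_⟩
  have : A * W = U * dg s := by
    ext l i
    rw [dg, mul_diagonal]
    by_cases h : s i = 0
    · have h1 := hin i i
      simp only [h, if_true] at h1
      have h2 : ∑ l, ‖(A * W) l i‖ ^ 2 = 0 := by
        have : ((∑ l, ‖(A * W) l i‖ ^ 2 : ℝ) : ℂ) = 0 := by
          push_cast
          rw [← (by simpa using h1 : ∑ l, star ((A * W) l i) * (A * W) l i = 0)]
          refine Finset.sum_congr rfl fun l _ => ?_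
          rw [Complex.star_def, Complex.conj_mul']
        exact_mod_cast this
      have h3 := (Finset.sum_eq_zero_iff_of_nonneg (fun _ _ => by positivity)).mp h2 l (Finset.mem_univ _)
      have h4 : (A * W) l i = 0 := by simpa using h3
      rw [h4, h]; simp
    · have h' : (s i : ℂ) ≠ 0 := by exact_mod_cast h
      simp only [U, of_apply, hb i h, v]
      field_simp
  rw [← this, Matrix.mul_assoc, hW.right, Matrix.mul_one]

noncomputable def fr {d : ℕ} (A : Matrix (Fin d) (Fin d) ℂ) : ℝ := (trace (Aᴴ * A)).re

noncomputable def np {d : ℕ} (p : ℝ) (A : Matrix (Fin d) (Fin d) ℂ) : ℝ :=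
  ∑ i, singularValues A i ^ p

noncomputable def cnt {d : ℕ} (A : Matrix (Fin d) (Fin d) ℂ) (s : ℝ) : ℕ :=
  (Finset.univ.filter fun i => s < singularValues A i).card

lemma cnt_eq_sum {d : ℕ} (A : Matrix (Fin d) (Fin d) ℂ) (s : ℝ) :
    (cnt A s : ℝ) = ∑ i, if s < singularValues A i then (1:ℝ) else 0 := by
  simp [cnt]

lemma fr_eq {d : ℕ} (A : Matrix (Fin d) (Fin d) ℂ) : fr A = ∑ i, singularValues A i ^ 2 := by
  unfold fr
  rw [(Matrix.isHermitian_conjTranspose_mul_self A).trace_eq_sum_eigenvalues]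
  simp [sv_sq]

lemma fr_nonneg {d : ℕ} (A : Matrix (Fin d) (Fin d) ℂ) : 0 ≤ fr A := by
  rw [fr_eq]; positivity

lemma np_nonneg {d : ℕ} (p : ℝ) (A : Matrix (Fin d) (Fin d) ℂ) : 0 ≤ np p A :=
  Finset.sum_nonneg fun i _ => Real.rpow_nonneg (sv_nonneg A i) p

lemma np_two {d : ℕ} (A : Matrix (Fin d) (Fin d) ℂ) : np 2 A = fr A := by
  rw [fr_eq]; simp [np]

lemma cnt_le_np {d : ℕ} (A : Matrix (Fin d) (Fin d) ℂ) {s p : ℝ} (hs : 0 < s) (hp : 0 < p) :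
    (cnt A s : ℝ) * s ^ p ≤ np p A := by
  rw [cnt_eq_sum, np, Finset.sum_mul]
  refine Finset.sum_le_sum fun i _ => ?_
  split_ifs with h
  · rw [one_mul]; exact Real.rpow_le_rpow hs.le h.le hp.le
  · rw [zero_mul]; exact Real.rpow_nonneg (sv_nonneg A i) p

lemma cnt_le_fr {d : ℕ} (A : Matrix (Fin d) (Fin d) ℂ) {s : ℝ} (hs : 0 < s) :
    (cnt A s : ℝ) * s ^ 2 ≤ fr A := by
  have := cnt_le_np A hs (p := 2) (by norm_num)
  rw [np_two] at this
  simpa using this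

noncomputable def nsq {d : ℕ} (v : Fin d → ℂ) : ℝ := ∑ i, ‖v i‖ ^ 2

lemma nsq_eq {d : ℕ} (v : Fin d → ℂ) : (nsq v : ℂ) = star v ⬝ᵥ v := by
  simp only [nsq, dotProduct, Pi.star_apply]
  push_cast
  refine Finset.sum_congr rfl fun i _ => ?_
  rw [Complex.star_def, Complex.conj_mul']

lemma nsq_unitary {d : ℕ} {U : Matrix (Fin d) (Fin d) ℂ} (hU : IsU U) (v : Fin d → ℂ) :
    nsq (U *ᵥ v) = nsq v := by
  have : (nsq (U *ᵥ v) : ℂ) = nsq v := by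
    rw [nsq_eq, nsq_eq, star_mulVec, ← dotProduct_mulVec, mulVec_mulVec, hU, one_mulVec]
  exact_mod_cast this

lemma nsq_svd {d : ℕ} {A U V : Matrix (Fin d) (Fin d) ℂ} (hU : IsU U) (s : Fin d → ℝ)
    (h : A = U * dg s * V) (v : Fin d → ℂ) :
    nsq (A *ᵥ v) = ∑ i, s i ^ 2 * ‖(V *ᵥ v) i‖ ^ 2 := by
  rw [h, Matrix.mul_assoc, ← mulVec_mulVec, nsq_unitary hU, ← mulVec_mulVec]
  simp only [nsq, dg, mulVec_diagonal, norm_mul, mul_pow]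
  refine Finset.sum_congr rfl fun i _ => ?_
  simp

lemma ker_dim {d : ℕ} (V : Matrix (Fin d) (Fin d) ℂ) (I : Finset (Fin d)) :
    ∃ S : Submodule ℂ (Fin d → ℂ), d ≤ Module.finrank ℂ S + I.card ∧
      ∀ v, v ∈ S ↔ ∀ i ∈ I, (V *ᵥ v) i = 0 := by
  let L : (Fin d → ℂ) →ₗ[ℂ] (I → ℂ) := (LinearMap.funLeft ℂ ℂ (Subtype.val : I → Fin d)) ∘ₗ V.mulVecLin
  refine ⟨LinearMap.ker L, ?_, ?_⟩
  · have h1 := LinearMap.finrank_range_add_finrank_ker L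
    have h2 : Module.finrank ℂ (LinearMap.range L) ≤ I.card := by
      have := Submodule.finrank_le (LinearMap.range L)
      simpa using this
    have h3 : Module.finrank ℂ (Fin d → ℂ) = d := by simp
    omega
  · intro v
    rw [LinearMap.mem_ker, funext_iff]
    simp only [L, LinearMap.comp_apply, LinearMap.funLeft_apply, mulVecLin_apply, Pi.zero_apply]
    simp

lemma cnt_sub {d : ℕ} (A : Matrix (Fin d) (Fin d) ℂ) {s : ℝ} (hs : 0 ≤ s) :
    ∃ S : Submodule ℂ (Fin d → ℂ), d ≤ Module.finrank ℂ S + cnt A s ∧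
      ∀ v ∈ S, nsq (A *ᵥ v) ≤ s ^ 2 * nsq v := by
  obtain ⟨U, V, hU, hV, h⟩ := exists_svd A
  obtain ⟨S, hS, hm⟩ := ker_dim V (Finset.univ.filter fun i => s < singularValues A i)
  refine ⟨S, hS, fun v hv => ?_⟩
  rw [nsq_svd hU _ h, ← nsq_unitary hV v, nsq, Finset.mul_sum]
  refine Finset.sum_le_sum fun i _ => ?_
  by_cases hi : s < singularValues A i
  · rw [(hm v).mp hv i (by simp [hi])]; simp
  · have : singularValues A i ^ 2 ≤ s ^ 2 := pow_le_pow_left₀ (sv_nonneg A i) (not_lt.mp hi) 2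
    gcongr

lemma cnt_le {d : ℕ} (A : Matrix (Fin d) (Fin d) ℂ) {s : ℝ} (hs : 0 ≤ s)
    (S : Submodule ℂ (Fin d → ℂ)) (hS : ∀ v ∈ S, nsq (A *ᵥ v) ≤ s ^ 2 * nsq v) :
    cnt A s + Module.finrank ℂ S ≤ d := by
  obtain ⟨U, V, hU, hV, h⟩ := exists_svd A
  obtain ⟨W, hW, hm⟩ := ker_dim V (Finset.univ.filter fun i => ¬ s < singularValues A i)
  have hc : cnt A s + (Finset.univ.filter fun i => ¬ s < singularValues A i).card = d := by
    unfold cnt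
    rw [Finset.card_filter_add_card_filter_not]; simp
  have hdis : S ⊓ W = ⊥ := by
    rw [Submodule.eq_bot_iff]
    rintro v ⟨hv, hw⟩
    have h1 := hS v hv
    rw [nsq_svd hU _ h, ← nsq_unitary hV v, nsq, Finset.mul_sum] at h1
    by_contra hne
    have hle : ∀ i, s ^ 2 * ‖(V *ᵥ v) i‖ ^ 2 ≤ singularValues A i ^ 2 * ‖(V *ᵥ v) i‖ ^ 2 := by
      intro i
      by_cases hi : s < singularValues A i
      · gcongr
      · rw [(hm v).mp hw i (by simpa using hi)]; simp
    have hex : ∃ i, (V *ᵥ v) i ≠ 0 := by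
      by_contra hcon
      push Not at hcon
      apply hne
      have : V *ᵥ v = 0 := funext hcon
      have h2 := congrArg (fun x => Vᴴ *ᵥ x) this
      simpa [mulVec_mulVec, show Vᴴ * V = 1 from hV] using h2
    obtain ⟨i, hi⟩ := hex
    have hsi : s < singularValues A i := by
      by_contra hcon
      exact hi ((hm v).mp hw i (by simpa using hcon))
    have : s ^ 2 * ‖(V *ᵥ v) i‖ ^ 2 < singularValues A i ^ 2 * ‖(V *ᵥ v) i‖ ^ 2 := by
      have : 0 < ‖(V *ᵥ v) i‖ := norm_pos_iff.mpr hi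
      gcongr
    exact absurd h1 (not_le.mpr (Finset.sum_lt_sum (fun i _ => hle i) ⟨i, Finset.mem_univ _, this⟩))
  have h1 := Submodule.finrank_sup_add_finrank_inf_eq S W
  rw [hdis, finrank_bot] at h1
  have h2 : Module.finrank ℂ (S ⊔ W : Submodule ℂ (Fin d → ℂ)) ≤ d := by
    have := Submodule.finrank_le (S ⊔ W); simpa using this
  omega

lemma inf_dim {d : ℕ} (S W : Submodule ℂ (Fin d → ℂ)) :
    Module.finrank ℂ S + Module.finrank ℂ W ≤ d + Module.finrank ℂ (S ⊓ W : Submodule ℂ (Fin d → ℂ)) := by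
  have h1 := Submodule.finrank_sup_add_finrank_inf_eq S W
  have h2 : Module.finrank ℂ (S ⊔ W : Submodule ℂ (Fin d → ℂ)) ≤ d := by
    have := Submodule.finrank_le (S ⊔ W); simpa using this
  omega

lemma nsq_add {d : ℕ} {v w : Fin d → ℂ} {a s t : ℝ} (hs : 0 ≤ s) (ht : 0 ≤ t) (ha : 0 ≤ a)
    (h1 : nsq v ≤ s ^ 2 * a) (h2 : nsq w ≤ t ^ 2 * a) : nsq (v + w) ≤ (s + t) ^ 2 * a := by
  have e : ∀ u : Fin d → ℂ, ‖WithLp.toLp 2 u‖ ^ 2 = nsq u := fun u => by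
    rw [EuclideanSpace.norm_sq_eq]; rfl
  have hv : ‖WithLp.toLp 2 v‖ ≤ s * √a := by
    apply abs_le_of_sq_le_sq' _ (by positivity) |>.2
    rw [e, mul_pow, Real.sq_sqrt ha]; exact h1
  have hw : ‖WithLp.toLp 2 w‖ ≤ t * √a := by
    apply abs_le_of_sq_le_sq' _ (by positivity) |>.2
    rw [e, mul_pow, Real.sq_sqrt ha]; exact h2
  rw [← e]
  have : ‖WithLp.toLp 2 (v + w)‖ ≤ (s + t) * √a := by
    rw [WithLp.toLp_add]
    refine (norm_add_le _ _).trans ?_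
    linarith
  calc _ ≤ ((s + t) * √a) ^ 2 := by gcongr
    _ = _ := by rw [mul_pow, Real.sq_sqrt ha]

lemma cnt_add {d : ℕ} (A B : Matrix (Fin d) (Fin d) ℂ) {s t : ℝ} (hs : 0 ≤ s) (ht : 0 ≤ t) :
    cnt (A + B) (s + t) ≤ cnt A s + cnt B t := by
  obtain ⟨S, hS, hS'⟩ := cnt_sub A hs
  obtain ⟨W, hW, hW'⟩ := cnt_sub B ht
  have h1 := cnt_le (A + B) (add_nonneg hs ht) (S ⊓ W) (by
    rintro v ⟨hv, hw⟩
    rw [add_mulVec]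
    exact nsq_add hs ht (by unfold nsq; positivity) (hS' v hv) (hW' v hw))
  have h2 := inf_dim S W
  omega

lemma cnt_smul_mono {d : ℕ} (A B : Matrix (Fin d) (Fin d) ℂ) {s : ℝ} (hs : 0 ≤ s) (k : ℕ)
    (K : Submodule ℂ (Fin d → ℂ)) (hK : d ≤ Module.finrank ℂ K + k)
    (h : ∀ v ∈ K, A *ᵥ v = B *ᵥ v) : cnt A s ≤ cnt B s + k := by
  obtain ⟨S, hS, hS'⟩ := cnt_sub B hs
  have h1 := cnt_le A hs (S ⊓ K) (by
    rintro v ⟨hv, hw⟩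
    rw [h v hw]
    exact hS' v hv)
  have h2 := inf_dim S K
  omega

structure IsP {d : ℕ} (q : Matrix (Fin d) (Fin d) ℂ) : Prop where
  h : qᴴ = q
  i : q * q = q

noncomputable def tr {d : ℕ} (A : Matrix (Fin d) (Fin d) ℂ) : ℝ := (trace A).re

lemma tr_add {d : ℕ} (A B : Matrix (Fin d) (Fin d) ℂ) : tr (A + B) = tr A + tr B := by simp [tr]
lemma tr_sub {d : ℕ} (A B : Matrix (Fin d) (Fin d) ℂ) : tr (A - B) = tr A - tr B := by simp [tr]
lemma tr_smul {d : ℕ} (c : ℝ) (A : Matrix (Fin d) (Fin d) ℂ) : tr (c • A) = c * tr A := by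
  simp [tr, trace_smul]
lemma tr_comm {d : ℕ} (A B : Matrix (Fin d) (Fin d) ℂ) : tr (A * B) = tr (B * A) := by
  simp [tr, trace_mul_comm A B]
lemma tr_ct {d : ℕ} (A : Matrix (Fin d) (Fin d) ℂ) : tr (Aᴴ) = tr A := by
  simp [tr, trace_conjTranspose]

lemma tr_nonneg {d : ℕ} {A : Matrix (Fin d) (Fin d) ℂ} (h : A.PosSemidef) : 0 ≤ tr A := by
  have := h.trace_nonneg
  exact (Complex.le_def.mp this).1

lemma tr_mul_nonneg {d : ℕ} {A B : Matrix (Fin d) (Fin d) ℂ} (h : A.PosSemidef) (hB : B.PosSemidef) :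
    0 ≤ tr (A * B) := by
  obtain ⟨U, hU, hd⟩ := herm_diag h.isHermitian
  have h0 := fun i => h.eigenvalues_nonneg i
  set e := h.isHermitian.eigenvalues with he
  have hC : A = (dg (fun i => √(e i)) * Uᴴ)ᴴ * (dg (fun i => √(e i)) * Uᴴ) := by
    rw [conjTranspose_mul, dg_ct, conjTranspose_conjTranspose, Matrix.mul_assoc, ← Matrix.mul_assoc (dg _), dg_mul]
    simp only [Real.mul_self_sqrt (h0 _)]
    rw [hd, Matrix.mul_assoc]
  rw [hC, Matrix.mul_assoc, tr_comm]
  exact tr_nonneg (hB.mul_mul_conjTranspose_same _)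

lemma fr_def {d : ℕ} (A : Matrix (Fin d) (Fin d) ℂ) : fr A = tr (Aᴴ * A) := rfl

lemma fr_add {d : ℕ} (A B : Matrix (Fin d) (Fin d) ℂ) : fr (A + B) = fr A + fr B + 2 * tr (Aᴴ * B) := by
  have : tr (Bᴴ * A) = tr (Aᴴ * B) := by
    rw [← tr_ct]; simp
  simp only [fr_def, conjTranspose_add, Matrix.add_mul, Matrix.mul_add, tr_add]
  linarith

lemma fr_smul {d : ℕ} (c : ℝ) (A : Matrix (Fin d) (Fin d) ℂ) : fr (c • A) = c ^ 2 * fr A := by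
  simp only [fr_def, conjTranspose_smul, Matrix.smul_mul, Matrix.mul_smul, tr_smul, star_trivial]
  ring

lemma IsP.one_sub {d : ℕ} {q : Matrix (Fin d) (Fin d) ℂ} (hq : IsP q) : IsP (1 - q) := by
  constructor
  · simp [hq.h]
  · simp [Matrix.sub_mul, Matrix.mul_sub, hq.i]

lemma IsP.sub {d : ℕ} {q p : Matrix (Fin d) (Fin d) ℂ} (hq : IsP q) (hp : IsP p) (h1 : p * q = p)
    (h2 : q * p = p) : IsP (q - p) := by
  constructor
  · simp [hq.h, hp.h]
  · simp [Matrix.sub_mul, Matrix.mul_sub, hq.i, hp.i, h1, h2]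

lemma IsP.psd {d : ℕ} {q : Matrix (Fin d) (Fin d) ℂ} (hq : IsP q) : q.PosSemidef := by
  have := Matrix.posSemidef_conjTranspose_mul_self q
  rwa [hq.h, hq.i] at this

lemma IsP.conj {d : ℕ} {q A : Matrix (Fin d) (Fin d) ℂ} (hq : IsP q) (hA : A.PosSemidef) :
    (q * A * q).PosSemidef := by
  have := hA.mul_mul_conjTranspose_same q
  rwa [hq.h] at this

lemma fr_left {d : ℕ} {q : Matrix (Fin d) (Fin d) ℂ} (hq : IsP q) (A : Matrix (Fin d) (Fin d) ℂ) :
    fr (q * A) ≤ fr A := by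
  have h : fr A = fr (q * A) + fr ((1 - q) * A) := by
    simp only [fr_def, conjTranspose_mul, hq.h, hq.one_sub.h]
    rw [Matrix.mul_assoc, ← Matrix.mul_assoc q, hq.i, Matrix.mul_assoc, ← Matrix.mul_assoc (1 - q), hq.one_sub.i,
      ← tr_add]
    congr 1
    simp [Matrix.sub_mul, Matrix.mul_sub]
  have := fr_nonneg ((1 - q) * A)
  linarith

lemma fr_ct {d : ℕ} (A : Matrix (Fin d) (Fin d) ℂ) : fr (Aᴴ) = fr A := by
  simp only [fr_def, conjTranspose_conjTranspose]; exact tr_comm _ _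

lemma fr_corner {d : ℕ} {q : Matrix (Fin d) (Fin d) ℂ} (hq : IsP q) (A : Matrix (Fin d) (Fin d) ℂ) :
    fr (q * A * q) ≤ fr A := by
  have h1 : fr (q * A * q) = fr (q * (q * A)ᴴ) := by
    rw [← fr_ct, conjTranspose_mul, hq.h]
  rw [h1]
  refine (fr_left hq _).trans ?_
  rw [fr_ct]
  exact fr_left hq _

lemma proj_ker {d : ℕ} {R : Matrix (Fin d) (Fin d) ℂ} (hR : IsP R) (A : Matrix (Fin d) (Fin d) ℂ) :
    ∃ (k : ℕ) (S : Submodule ℂ (Fin d → ℂ)), d ≤ Module.finrank ℂ S + k ∧ (k : ℝ) = tr R ∧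
      ∀ v ∈ S, R *ᵥ (A *ᵥ v) = 0 := by
  obtain ⟨U, hU, h⟩ := herm_diag hR.h
  set e := Matrix.IsHermitian.eigenvalues hR.h with he
  have he2 : ∀ i, e i * e i = e i := by
    have h1 : dg (fun i => e i * e i) = dg e := by
      have h2 : ∀ f : Fin d → ℝ, Uᴴ * (U * dg f * Uᴴ) * U = dg f := fun f => by
        calc _ = (Uᴴ * U) * dg f * (Uᴴ * U) := by simp only [Matrix.mul_assoc]
          _ = _ := by rw [hU]; simp
      rw [← dg_mul, ← h2 e, ← h]
      have h3 : Uᴴ * R * U * (Uᴴ * R * U) = Uᴴ * (R * (U * Uᴴ) * R) * U := by simp only [Matrix.mul_assoc]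
      rw [h3, hU.right, Matrix.mul_one, hR.i]
    intro i
    have := congrFun (congrFun h1 i) i
    simp only [dg, diagonal_apply_eq] at this
    exact_mod_cast this
  have h01 : ∀ i, e i = if e i ≠ 0 then 1 else 0 := by
    intro i
    split_ifs with h
    · exact mul_left_cancel₀ h (by rw [he2]; simp)
    · simpa using h
  obtain ⟨S, hS, hm⟩ := ker_dim (Uᴴ * A) (Finset.univ.filter fun i => e i ≠ 0)
  refine ⟨_, S, hS, ?_, ?_⟩
  · have : tr R = ∑ i, e i := by
      rw [h, tr_comm, ← Matrix.mul_assoc, hU, Matrix.one_mul]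
      simp [tr, dg]
    rw [this, Finset.sum_congr rfl fun i _ => h01 i, Finset.card_filter]
    push_cast
    exact Finset.sum_congr rfl fun i _ => by split_ifs <;> rfl
  · intro v hv
    conv_lhs => rw [h]
    rw [← mulVec_mulVec, ← mulVec_mulVec]
    have : dg e *ᵥ (Uᴴ *ᵥ (A *ᵥ v)) = 0 := by
      ext i
      rw [dg, mulVec_diagonal]
      by_cases hi : e i = 0
      · simp [hi]
      · have := (hm v).mp hv i (by simpa using hi)
        rw [mulVec_mulVec, this]; simp
    rw [this, mulVec_zero]

lemma cnt_corner {d : ℕ} {Q : Matrix (Fin d) (Fin d) ℂ} (hQ : IsP Q) (A : Matrix (Fin d) (Fin d) ℂ)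
    {s : ℝ} (hs : 0 ≤ s) : (cnt A s : ℝ) ≤ cnt (Q * A * Q) s + 2 * tr (1 - Q) := by
  obtain ⟨k, S, hS, hk, hv⟩ := proj_ker hQ.one_sub 1
  obtain ⟨k', S', hS', hk', hv'⟩ := proj_ker hQ.one_sub A
  have hh : ∀ v, (1 - Q) *ᵥ v = 0 → Q *ᵥ v = v := by
    intro v h
    rw [sub_mulVec, one_mulVec, sub_eq_zero] at h; exact h.symm
  have := cnt_smul_mono A (Q * A * Q) hs (k + k') (S ⊓ S') (by have := inf_dim S S'; omega) (by
    rintro v ⟨h1, h2⟩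
    have h3 := hh _ (hv v h1)
    rw [one_mulVec] at h3
    rw [← mulVec_mulVec, h3, ← mulVec_mulVec, hh _ (hv' v h2)])
  have h4 : (cnt A s : ℝ) ≤ cnt (Q * A * Q) s + (k + k') := by exact_mod_cast this
  rw [hk, hk'] at h4
  linarith

lemma psd_dg {d : ℕ} {U : Matrix (Fin d) (Fin d) ℂ} {e : Fin d → ℝ} (he : ∀ i, 0 ≤ e i) :
    (U * dg e * Uᴴ).PosSemidef := by
  apply PosSemidef.mul_mul_conjTranspose_same
  apply PosSemidef.diagonal
  intro i
  show (0 : ℂ) ≤ (e i : ℂ)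
  exact_mod_cast he i

lemma sand_mul {d : ℕ} {U : Matrix (Fin d) (Fin d) ℂ} (hU : IsU U) (e f : Fin d → ℝ) :
    (U * dg e * Uᴴ) * (U * dg f * Uᴴ) = U * dg (fun i => e i * f i) * Uᴴ := by
  calc _ = U * (dg e * (Uᴴ * U) * dg f) * Uᴴ := by simp only [Matrix.mul_assoc]
    _ = _ := by rw [hU, Matrix.mul_one, dg_mul]

lemma sand_ct {d : ℕ} (U : Matrix (Fin d) (Fin d) ℂ) (e : Fin d → ℝ) :
    (U * dg e * Uᴴ)ᴴ = U * dg e * Uᴴ := by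
  simp [dg_ct, Matrix.mul_assoc]

lemma sand_sub {d : ℕ} (U : Matrix (Fin d) (Fin d) ℂ) (e f : Fin d → ℝ) :
    (U * dg e * Uᴴ) - (U * dg f * Uᴴ) = U * dg (fun i => e i - f i) * Uᴴ := by
  rw [← Matrix.sub_mul, ← Matrix.mul_sub]
  congr 2
  simp [dg]

lemma sand_smul {d : ℕ} (U : Matrix (Fin d) (Fin d) ℂ) (c : ℝ) (e : Fin d → ℝ) :
    c • (U * dg e * Uᴴ) = U * dg (fun i => c * e i) * Uᴴ := by
  rw [← Matrix.smul_mul, ← Matrix.mul_smul]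
  congr 2
  ext i k
  simp [dg, diagonal_apply]

lemma sand_one {d : ℕ} {U : Matrix (Fin d) (Fin d) ℂ} (hU : IsU U) :
    U * dg (fun _ => 1) * Uᴴ = 1 := by
  have : dg (fun _ : Fin d => 1) = 1 := by simp [dg]
  rw [this, Matrix.mul_one, hU.right]

lemma spectral {d : ℕ} {A : Matrix (Fin d) (Fin d) ℂ} (hA : A.IsHermitian) {s : ℝ} (hs : 0 < s) :
    ∃ p B : Matrix (Fin d) (Fin d) ℂ, IsP p ∧ p = A * B ∧ p = B * A ∧ (p * A * p - s • p).PosSemidef ∧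
      (s • (1 - p) - (1 - p) * A * (1 - p)).PosSemidef := by
  classical
  obtain ⟨U, hU, h⟩ := herm_diag hA
  set e := hA.eigenvalues with he
  let f : Fin d → ℝ := fun i => if s < e i then 1 else 0
  have key : ∀ i, f i * f i = f i := fun i => by simp only [f]; split_ifs <;> simp
  refine ⟨U * dg f * Uᴴ, U * dg (fun i => f i / e i) * Uᴴ, ⟨sand_ct _ _, ?_⟩, ?_, ?_, ?_, ?_⟩
  · rw [sand_mul hU]; simp only [key]
  · rw [h, sand_mul hU]
    congr 3; funext i
    simp only [f]
    split_ifs with hi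
    · have : e i ≠ 0 := (hs.trans hi).ne'
      field_simp
    · simp
  · rw [h, sand_mul hU]
    congr 3; funext i
    simp only [f]
    split_ifs with hi
    · have : e i ≠ 0 := (hs.trans hi).ne'
      field_simp
    · simp
  · rw [h, sand_mul hU, sand_mul hU, sand_smul, sand_sub]
    apply psd_dg
    intro i
    simp only [f]
    split_ifs with hi
    · linarith
    · simp
  · rw [h, ← sand_one hU, sand_sub, sand_mul hU, sand_mul hU, sand_smul, sand_sub]
    apply psd_dg
    intro i
    simp only [f]
    split_ifs with hi
    · simp
    · linarith

lemma branch {d : ℕ} {q m : Matrix (Fin d) (Fin d) ℂ} (hq : IsP q) (hm : m.PosSemidef) {s c : ℝ} (hs : 0 < s)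
    (h2 : (c • q - q * m * q).PosSemidef) :
    ∃ p : Matrix (Fin d) (Fin d) ℂ, IsP p ∧ p * q = p ∧ q * p = p ∧
      (s • (q - p) - (q - p) * m * (q - p)).PosSemidef ∧
      fr (q * m * q) ≤ fr ((q - p) * m * (q - p)) + c * tr (p * m) ∧ s * tr p ≤ tr (p * m) := by
  have hA : (q * m * q).PosSemidef := hq.conj hm
  obtain ⟨p, B, hp, h3, h4, h5, h6⟩ := spectral hA.isHermitian hs
  set A := q * m * q with hAdef
  have hqA : q * A = A := by simp only [hAdef, ← Matrix.mul_assoc, hq.i]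
  have hAq : A * q = A := by simp only [hAdef, Matrix.mul_assoc, hq.i]
  have hqp : q * p = p := by
    rw [h3, ← Matrix.mul_assoc, hqA]
  have hpq : p * q = p := by
    conv_lhs => rw [h4, Matrix.mul_assoc, hAq]
    exact h4.symm
  have hc : A * p = p * A := by
    calc A * p = A * (B * A) := by rw [← h4]
      _ = p * A := by rw [← Matrix.mul_assoc, ← h3]
  have e1 : q * (1 - p) = q - p := by rw [Matrix.mul_sub, Matrix.mul_one, hqp]
  have e2 : (1 - p) * q = q - p := by rw [Matrix.sub_mul, Matrix.one_mul, hpq]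
  have e3 : (1 - p) * A * (1 - p) = (q - p) * m * (q - p) := by
    calc _ = ((1 - p) * q) * m * (q * (1 - p)) := by simp only [hAdef, Matrix.mul_assoc]
      _ = _ := by rw [e1, e2]
  have htA : tr (p * A * p) = tr (p * m) := by
    rw [tr_comm, ← Matrix.mul_assoc, hp.i, hAdef, ← Matrix.mul_assoc, ← Matrix.mul_assoc, hpq, tr_comm,
      ← Matrix.mul_assoc, hqp]
  refine ⟨p, hp, hpq, hqp, ?_, ?_, ?_⟩
  · have := hq.conj h6
    rw [e3] at this
    have e4 : q * (q - p) = q - p := by rw [Matrix.mul_sub, hq.i, hqp]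
    have e5 : (q - p) * q = q - p := by rw [Matrix.sub_mul, hq.i, hpq]
    have e9 : q * ((q - p) * m * (q - p)) * q = (q - p) * m * (q - p) := by
      calc _ = (q * (q - p)) * m * ((q - p) * q) := by simp only [Matrix.mul_assoc]
        _ = _ := by rw [e4, e5]
    convert this using 1
    rw [Matrix.mul_sub q (s • (1 - p)), Matrix.sub_mul (q * s • (1 - p)), e9, Matrix.mul_smul, Matrix.smul_mul, e1, e5]
  · rw [← e3]
    have hsplit : fr A = fr ((1 - p) * A * (1 - p)) + fr (p * A * p) := by
      have hA' : A = (1 - p) * A * (1 - p) + p * A * p := by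
        have : p * A * p = p * A := by rw [Matrix.mul_assoc, hc, ← Matrix.mul_assoc, hp.i]
        simp only [Matrix.sub_mul, Matrix.mul_sub, Matrix.one_mul, Matrix.mul_one, hc, this]
        abel
      conv_lhs => rw [hA']
      rw [fr_add]
      have : ((1 - p) * A * (1 - p))ᴴ * (p * A * p) = 0 := by
        rw [conjTranspose_mul, conjTranspose_mul, hp.one_sub.h]
        have e0 : (1 - p) * p = 0 := by rw [Matrix.sub_mul, Matrix.one_mul, hp.i, sub_self]
        calc _ = (1 - p) * Aᴴ * ((1 - p) * p) * A * p := by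
              simp only [Matrix.mul_assoc]
          _ = 0 := by rw [e0]; simp
      rw [this]; simp [tr]
    rw [hsplit]
    have hX := hp.conj hA
    have hX2 := hp.conj h2
    have h7 := tr_mul_nonneg hX hX2
    have e6 : p * (c • q - A) * p = c • p - p * A * p := by
      rw [Matrix.mul_sub, Matrix.sub_mul, Matrix.mul_smul, Matrix.smul_mul, hpq, hp.i]
    rw [e6, Matrix.mul_sub, tr_sub, Matrix.mul_smul, tr_smul] at h7
    have e7 : p * A * p * p = p * A * p := by rw [Matrix.mul_assoc, hp.i]
    rw [e7, htA] at h7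
    have e8 : fr (p * A * p) = tr (p * A * p * (p * A * p)) := by
      rw [fr_def, hX.isHermitian.eq]
    linarith
  · have := tr_nonneg h5
    rw [tr_sub, tr_smul, htA] at this
    linarith

/-- dyadic probability space -/
def Om : ℕ → Type
  | 0 => Unit
  | k + 1 => Bool × Om k

noncomputable def mean {E : Type} [AddCommGroup E] [Module ℝ E] : (K : ℕ) → (Om K → E) → E
  | 0, x => x ()
  | k + 1, x => (1 / 2 : ℝ) • (mean k (fun ω => x (false, ω)) + mean k (fun ω => x (true, ω)))

noncomputable def TT {E : Type} [AddCommGroup E] [Module ℝ E] : (K : ℕ) → (ℕ → ℝ) → (Om K → E) → Om K → E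
  | 0, _, _ => fun _ => 0
  | k + 1, v, x => fun ω => v 0 • (mean k (fun ω' => x (ω.1, ω')) - mean (k + 1) x)
      + TT k (fun i => v (i + 1)) (fun ω' => x (ω.1, ω')) ω.2

section
variable {E F : Type} [AddCommGroup E] [Module ℝ E] [AddCommGroup F] [Module ℝ F]

lemma mean_succ (k : ℕ) (x : Om (k + 1) → E) : mean (k + 1) x =
    (1 / 2 : ℝ) • (mean k (fun ω => x (false, ω)) + mean k (fun ω => x (true, ω))) := rfl

lemma mean_map (L : E →ₗ[ℝ] F) (K : ℕ) (x : Om K → E) : mean K (fun ω => L (x ω)) = L (mean K x) := by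
  induction K with
  | zero => rfl
  | succ k ih => simp only [mean_succ, ih, map_smul, map_add]

lemma mean_add (K : ℕ) (x y : Om K → E) : mean K (fun ω => x ω + y ω) = mean K x + mean K y := by
  induction K with
  | zero => rfl
  | succ k ih => simp only [mean_succ, ih, ← smul_add]; congr 1; abel

lemma mean_smul (c : ℝ) (K : ℕ) (x : Om K → E) : mean K (fun ω => c • x ω) = c • mean K x :=
  mean_map (LinearMap.lsmul ℝ E c) K x

lemma mean_sub (K : ℕ) (x y : Om K → E) : mean K (fun ω => x ω - y ω) = mean K x - mean K y := by
  induction K with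
  | zero => rfl
  | succ k ih => simp only [mean_succ, ih, ← smul_sub]; congr 1; abel

lemma mean_const (K : ℕ) (c : E) : mean K (fun _ => c) = c := by
  induction K with
  | zero => rfl
  | succ k ih => simp only [mean_succ, ih, ← two_smul ℝ c, smul_smul]; norm_num

lemma mean_mul (c : ℝ) (K : ℕ) (x : Om K → ℝ) : mean K (fun ω => c * x ω) = c * mean K x :=
  mean_smul c K x

lemma mean_mono (K : ℕ) {x y : Om K → ℝ} (h : ∀ ω, x ω ≤ y ω) : mean K x ≤ mean K y := by
  induction K with
  | zero => exact h ()
  | succ k ih =>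
    have h1 := ih (fun ω => h (false, ω))
    have h2 := ih (fun ω => h (true, ω))
    simp only [mean_succ, smul_eq_mul]
    linarith

lemma mean_nonneg (K : ℕ) {x : Om K → ℝ} (h : ∀ ω, 0 ≤ x ω) : 0 ≤ mean K x := by
  have := mean_mono K h
  rwa [mean_const] at this

lemma TT_succ (k : ℕ) (v : ℕ → ℝ) (x : Om (k + 1) → E) (b : Bool) (ω : Om k) : TT (k + 1) v x (b, ω) =
    v 0 • (mean k (fun ω' => x (b, ω')) - mean (k + 1) x)
      + TT k (fun i => v (i + 1)) (fun ω' => x (b, ω')) ω := rfl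

lemma TT_map (L : E →ₗ[ℝ] F) (K : ℕ) (v : ℕ → ℝ) (x : Om K → E) (ω : Om K) :
    TT K v (fun ω => L (x ω)) ω = L (TT K v x ω) := by
  induction K generalizing v with
  | zero => exact (map_zero L).symm
  | succ k ih =>
    obtain ⟨b, ω⟩ := ω
    simp only [TT_succ, ih, mean_map, map_add, map_smul, map_sub]

lemma TT_add (K : ℕ) (v : ℕ → ℝ) (x y : Om K → E) (ω : Om K) :
    TT K v (fun ω => x ω + y ω) ω = TT K v x ω + TT K v y ω := by
  induction K generalizing v with
  | zero => exact (add_zero _).symm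
  | succ k ih =>
    obtain ⟨b, ω⟩ := ω
    simp only [TT_succ, ih, mean_add, smul_sub, smul_add]
    abel
end

lemma mean_mat {d : ℕ} {K : ℕ} {x : Om K → Matrix (Fin d) (Fin d) ℂ} (h : ∀ ω, (x ω).PosSemidef) :
    (mean K x).PosSemidef := by
  induction K with
  | zero => exact h ()
  | succ k ih =>
    have h1 := ih (fun ω => h (false, ω))
    have h2 := ih (fun ω => h (true, ω))
    rw [mean_succ]
    exact (h1.add h2).smul (by norm_num)

noncomputable def trL {d : ℕ} (A : Matrix (Fin d) (Fin d) ℂ) : Matrix (Fin d) (Fin d) ℂ →ₗ[ℝ] ℝ where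
  toFun X := tr (A * X)
  map_add' X Y := by rw [Matrix.mul_add, tr_add]
  map_smul' c X := by rw [Matrix.mul_smul, tr_smul]; rfl

lemma mean_tr {d : ℕ} (A : Matrix (Fin d) (Fin d) ℂ) (K : ℕ) (x : Om K → Matrix (Fin d) (Fin d) ℂ) :
    mean K (fun ω => tr (A * x ω)) = tr (A * mean K x) := mean_map (trL A) K x

lemma mean_fr_add {d : ℕ} (A : Matrix (Fin d) (Fin d) ℂ) (K : ℕ) (x : Om K → Matrix (Fin d) (Fin d) ℂ) :
    mean K (fun ω => fr (A + x ω)) = fr A + mean K (fun ω => fr (x ω)) + 2 * tr (Aᴴ * mean K x) := by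
  simp only [fr_add, mean_add, mean_const, mean_mul, mean_tr]

lemma fr_neg {d : ℕ} (A : Matrix (Fin d) (Fin d) ℂ) : fr (-A) = fr A := by
  have := fr_smul (-1) A
  simpa using this

lemma fr_paral {d : ℕ} (A B : Matrix (Fin d) (Fin d) ℂ) :
    fr (A - (1 / 2 : ℝ) • (A + B)) + fr (B - (1 / 2 : ℝ) • (A + B)) =
      fr A + fr B - 2 * fr ((1 / 2 : ℝ) • (A + B)) := by
  have e1 : A - (1 / 2 : ℝ) • (A + B) = (1 / 2 : ℝ) • (A + (-1 : ℝ) • B) := by module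
  have e2 : B - (1 / 2 : ℝ) • (A + B) = (1 / 2 : ℝ) • ((-1 : ℝ) • A + B) := by module
  rw [e1, e2]
  simp only [fr_smul, fr_add, conjTranspose_smul, Matrix.smul_mul, Matrix.mul_smul, tr_smul, star_trivial]
  ring

lemma wind {d : ℕ} (K : ℕ) : ∀ (v : ℕ → ℝ), (∀ i, |v i| ≤ 1) → ∀ (x : Om K → Matrix (Fin d) (Fin d) ℂ),
    (∀ ω, (x ω).PosSemidef) → ∀ (q : Matrix (Fin d) (Fin d) ℂ), IsP q → ∀ s : ℝ, 0 < s →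
    (s • q - q * mean K x * q).PosSemidef →
    ∃ Q W : Om K → Matrix (Fin d) (Fin d) ℂ, (∀ ω, IsP (Q ω)) ∧ (∀ ω, Q ω * q = Q ω) ∧ (∀ ω, q * Q ω = Q ω) ∧
      (∀ ω, (s • Q ω - Q ω * x ω * Q ω).PosSemidef) ∧ mean K W = 0 ∧
      (∀ ω, Q ω * W ω * Q ω = Q ω * TT K v x ω * Q ω) ∧
      mean K (fun ω => fr (W ω)) ≤ mean K (fun ω => fr (Q ω * x ω * Q ω)) - fr (q * mean K x * q)
        + 2 * s * mean K (fun ω => tr ((q - Q ω) * x ω)) ∧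
      s * mean K (fun ω => tr (q - Q ω)) ≤ mean K (fun ω => tr ((q - Q ω) * x ω)) := by
  induction K with
  | zero =>
    intro v hv x hx q hq s hs h
    refine ⟨fun _ => q, fun _ => 0, fun _ => hq, fun _ => hq.i, fun _ => hq.i, fun _ => h, rfl, ?_, ?_, ?_⟩
    · intro ω; rfl
    · simp [mean, fr, tr]
    · simp [mean, tr]
  | succ k ih =>
    intro v hv x hx q hq s hs h
    set m := mean (k + 1) x with hm
    let mb : Bool → Matrix (Fin d) (Fin d) ℂ := fun b => mean k (fun ω => x (b, ω))
    have hmb : ∀ b, (mb b).PosSemidef := fun b => mean_mat (fun ω => hx (b, ω))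
    have hmm : m = (1 / 2 : ℝ) • (mb false + mb true) := rfl
    have h2 : ∀ b, ((2 * s) • q - q * mb b * q).PosSemidef := by
      intro b
      have e : (2 * s) • q - q * mb b * q = (2 : ℝ) • (s • q - q * m * q) + q * mb (!b) * q := by
        rw [hmm]
        cases b <;> simp only [Bool.not_true, Bool.not_false, Matrix.mul_smul, Matrix.smul_mul, Matrix.mul_add, Matrix.add_mul] <;> module
      rw [e]
      exact (h.smul (by norm_num)).add (hq.conj (hmb _))
    have h3 := fun b => branch hq (hmb b) hs (h2 b)
    choose p hp hpq hqp hps hpf hpt using h3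
    have hqb := fun b => hq.sub (hp b) (hpq b) (hqp b)
    have h4 := fun b => ih (fun i => v (i + 1)) (fun i => hv _) (fun ω => x (b, ω)) (fun ω => hx _) (q - p b) (hqb b) s hs
      (hps b)
    choose Q W hQ hQq hqQ hQs hW0 hWT hWf hWt using h4
    have e1 : ∀ b, (q - p b) * q = q - p b := fun b => by rw [Matrix.sub_mul, hq.i, hpq]
    have e2 : ∀ b, q * (q - p b) = q - p b := fun b => by rw [Matrix.mul_sub, hq.i, hqp]
    have f1 : ∀ b ω, Q b ω * q = Q b ω := fun b ω => by
      rw [← hQq b ω, Matrix.mul_assoc, e1]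
    have f2 : ∀ b ω, q * Q b ω = Q b ω := fun b ω => by
      rw [← hqQ b ω, ← Matrix.mul_assoc, e2]
    let D : Bool → Matrix (Fin d) (Fin d) ℂ := fun b => q * (mb b - m) * q
    have ht : ∀ b, tr (p b * mb b) + mean k (fun ω => tr ((q - p b - Q b ω) * x (b, ω))) =
        mean k (fun ω => tr ((q - Q b ω) * x (b, ω))) := by
      intro b
      rw [← mean_tr, ← mean_add]
      congr 1; funext ω
      rw [← tr_add, ← Matrix.add_mul]; congr 2; abel
    refine ⟨fun ω => Q ω.1 ω.2, fun ω => v 0 • D ω.1 + W ω.1 ω.2, fun ω => hQ _ _, fun ω => f1 _ _, fun ω => f2 _ _,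
      fun ω => hQs _ _, ?_, ?_, ?_, ?_⟩
    · simp only [mean_succ, mean_add, mean_const, hW0, D, hmm]
      simp only [Matrix.mul_smul, Matrix.smul_mul, Matrix.mul_add, Matrix.add_mul, Matrix.mul_sub, Matrix.sub_mul]
      module
    · rintro ⟨b, ω⟩
      simp only [TT_succ]
      rw [Matrix.mul_add, Matrix.add_mul, hWT, Matrix.mul_add, Matrix.add_mul]
      congr 1
      rw [Matrix.mul_smul, Matrix.smul_mul, Matrix.mul_smul, Matrix.smul_mul]
      congr 1
      calc _ = (Q b ω * q) * (mb b - m) * (q * Q b ω) := by simp only [D, Matrix.mul_assoc]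
        _ = _ := by rw [f1, f2]
    · have g1 : ∀ b, mean k (fun ω => fr (v 0 • D b + W b ω)) ≤ fr (D b) + mean k (fun ω => fr (W b ω)) := by
        intro b
        rw [mean_fr_add, hW0, fr_smul]
        have : v 0 ^ 2 ≤ 1 := by have := sq_le_sq' (abs_le.mp (hv 0)).1 (abs_le.mp (hv 0)).2; simpa using this
        have := mul_le_mul_of_nonneg_right this (fr_nonneg (D b))
        simp only [Matrix.mul_zero]
        simp [tr] at *
        linarith
      have g2 : fr (D false) + fr (D true) = fr (q * mb false * q) + fr (q * mb true * q) - 2 * fr (q * m * q) := by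
        have e := fr_paral (q * mb false * q) (q * mb true * q)
        have e' : (1 / 2 : ℝ) • (q * mb false * q + q * mb true * q) = q * m * q := by
          rw [hmm]; simp only [Matrix.mul_smul, Matrix.smul_mul, Matrix.mul_add, Matrix.add_mul]
        rw [e'] at e
        rw [← e]; simp only [D, Matrix.mul_sub, Matrix.sub_mul]
      simp only [mean_succ (E := ℝ), smul_eq_mul]
      have a1 := g1 false; have a2 := g1 true
      have b1 := hWf false; have b2 := hWf true
      have c1 := hpf false; have c2 := hpf true
      have d1 := ht false; have d2 := ht true
      simp only [← d1, ← d2]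
      change _ ≤ _ - fr ((q - p false) * mb false * (q - p false)) + _ at b1
      change _ ≤ _ - fr ((q - p true) * mb true * (q - p true)) + _ at b2
      linarith
    · simp only [mean_succ (E := ℝ), smul_eq_mul]
      have b1 := hWt false; have b2 := hWt true
      have c1 := hpt false; have c2 := hpt true
      have d1 := ht false; have d2 := ht true
      simp only [← d1, ← d2]
      have k1 : ∀ b, mean k (fun ω => tr (q - Q b ω)) = tr (p b) + mean k (fun ω => tr (q - p b - Q b ω)) := by
        intro b
        rw [← mean_const k (tr (p b)), ← mean_add]
        congr 1; funext ω
        rw [← tr_add]; congr 1; abel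
      rw [k1, k1]
      linarith

lemma weak_type {d : ℕ} (K : ℕ) (v : ℕ → ℝ) (hv : ∀ i, |v i| ≤ 1) (x : Om K → Matrix (Fin d) (Fin d) ℂ)
    (hx : ∀ ω, (x ω).PosSemidef) {s : ℝ} (hs : 0 < s) :
    mean K (fun ω => (cnt (TT K v x ω) s : ℝ)) ≤ 4 / s * mean K (fun ω => tr (x ω)) := by
  have hm := mean_mat hx
  obtain ⟨p, B, hp, h3, h4, h5, h6⟩ := spectral hm.isHermitian hs
  obtain ⟨Q, W, hQ, hQq, hqQ, hQs, hW0, hWT, hWf, hWt⟩ := wind K v hv x hx (1 - p) hp.one_sub s hs h6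
  have htp : s * tr p ≤ mean K (fun ω => tr (p * x ω)) := by
    have := tr_nonneg h5
    rw [tr_sub, tr_smul, tr_comm, ← Matrix.mul_assoc, hp.i] at this
    rw [mean_tr]; linarith
  have hfr : ∀ ω, fr (Q ω * x ω * Q ω) ≤ s * tr (Q ω * x ω) := by
    intro ω
    have hX := (hQ ω).conj (hx ω)
    have := tr_mul_nonneg hX (hQs ω)
    have e7 : Q ω * x ω * Q ω * Q ω = Q ω * x ω * Q ω := by rw [Matrix.mul_assoc, (hQ ω).i]
    have e8 : tr (Q ω * x ω * Q ω) = tr (Q ω * x ω) := by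
      rw [tr_comm, ← Matrix.mul_assoc, (hQ ω).i]
    rw [Matrix.mul_sub, tr_sub, Matrix.mul_smul, tr_smul, e7, e8] at this
    rw [fr_def, hX.isHermitian.eq]
    linarith
  have hc : ∀ ω, (cnt (TT K v x ω) s : ℝ) ≤ 1 / s ^ 2 * fr (W ω) + 2 * tr (1 - Q ω) := by
    intro ω
    have h1 := cnt_corner (hQ ω) (TT K v x ω) hs.le
    rw [← hWT] at h1
    have h2 := cnt_le_fr (Q ω * W ω * Q ω) hs
    have h3 := fr_corner (hQ ω) (W ω)
    have h4 : (cnt (Q ω * W ω * Q ω) s : ℝ) ≤ 1 / s ^ 2 * fr (W ω) := by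
      rw [one_div, inv_mul_eq_div, le_div_iff₀ (by positivity)]
      linarith
    linarith
  have hc2 := mean_mono K hc
  rw [mean_add, mean_mul, mean_mul] at hc2
  have t1 : mean K (fun ω => tr (1 - Q ω)) = tr p + mean K (fun ω => tr (1 - p - Q ω)) := by
    rw [← mean_const K (tr p), ← mean_add]
    congr 1; funext ω
    rw [← tr_add]; congr 1; abel
  have hf2 := mean_mono K hfr
  rw [mean_mul] at hf2
  have t2 : mean K (fun ω => tr (x ω)) = mean K (fun ω => tr (Q ω * x ω)) + mean K (fun ω => tr (p * x ω)) +
      mean K (fun ω => tr ((1 - p - Q ω) * x ω)) := by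
    rw [← mean_add, ← mean_add]
    congr 1; funext ω
    rw [← tr_add, ← tr_add, ← Matrix.add_mul, ← Matrix.add_mul]
    congr 1
    have : Q ω + p + (1 - p - Q ω) = 1 := by abel
    rw [this, Matrix.one_mul]
  have n1 : 0 ≤ mean K (fun ω => tr (Q ω * x ω)) := mean_nonneg K fun ω => tr_mul_nonneg (hQ ω).psd (hx ω)
  have n2 : 0 ≤ mean K (fun ω => tr (p * x ω)) := mean_nonneg K fun ω => tr_mul_nonneg hp.psd (hx ω)
  have n3 := fr_nonneg ((1 - p) * mean K x * (1 - p))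
  have hW : mean K (fun ω => fr (W ω)) ≤ s * (mean K (fun ω => tr (Q ω * x ω)) +
      2 * mean K (fun ω => tr ((1 - p - Q ω) * x ω))) := by linarith
  refine hc2.trans ?_
  rw [t1, t2]
  set a := mean K (fun ω => tr (Q ω * x ω))
  set b := mean K (fun ω => tr (p * x ω))
  set c := mean K (fun ω => tr ((1 - p - Q ω) * x ω))
  have hW' : 1 / s ^ 2 * mean K (fun ω => fr (W ω)) ≤ 1 / s * (a + 2 * c) := by
    calc _ ≤ 1 / s ^ 2 * (s * (a + 2 * c)) := mul_le_mul_of_nonneg_left hW (by positivity)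
      _ = _ := by field_simp
  have hp' : tr p ≤ 1 / s * b := by
    rw [one_div, inv_mul_eq_div, le_div_iff₀ hs]; linarith
  have hq' : mean K (fun ω => tr (1 - p - Q ω)) ≤ 1 / s * c := by
    rw [one_div, inv_mul_eq_div, le_div_iff₀ hs]; linarith
  have : 4 / s * (a + b + c) = 1 / s * (a + 2 * c) + 2 * (1 / s * b + 1 / s * c) + 1 / s * (3 * a + 2 * b) := by ring
  rw [this]
  have : 0 ≤ 1 / s * (3 * a + 2 * b) := by positivity
  linarith

lemma l2_bound {d : ℕ} (K : ℕ) : ∀ (v : ℕ → ℝ), (∀ i, |v i| ≤ 1) → ∀ (x : Om K → Matrix (Fin d) (Fin d) ℂ),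
    mean K (TT K v x) = 0 ∧ mean K (fun ω => fr (TT K v x ω)) ≤ mean K (fun ω => fr (x ω)) - fr (mean K x) := by
  induction K with
  | zero =>
    intro v hv x
    refine ⟨rfl, ?_⟩
    simp [mean, TT, fr]
  | succ k ih =>
    intro v hv x
    have ih' := fun b => ih (fun i => v (i + 1)) (fun i => hv _) (fun ω => x (b, ω))
    constructor
    · simp only [mean_succ, TT_succ, mean_add, mean_const]
      rw [show mean k (fun ω => TT k (fun i => v (i + 1)) (fun ω' => x (false, ω')) ω) = 0 from (ih' false).1,
        show mean k (fun ω => TT k (fun i => v (i + 1)) (fun ω' => x (true, ω')) ω) = 0 from (ih' true).1]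
      module
    · simp only [mean_succ (E := ℝ), TT_succ, smul_eq_mul]
      set m := mean (k + 1) x with hm
      have g1 : ∀ b, mean k (fun ω => fr (v 0 • (mean k (fun ω => x (b, ω)) - m) +
          TT k (fun i => v (i + 1)) (fun ω' => x (b, ω')) ω))
          ≤ fr (mean k (fun ω => x (b, ω)) - m) + (mean k (fun ω => fr (x (b, ω))) - fr (mean k fun ω => x (b, ω))) := by
        intro b
        rw [mean_fr_add, show mean k (fun ω => TT k (fun i => v (i + 1)) (fun ω' => x (b, ω')) ω) = 0 from (ih' b).1, fr_smul]
        have : v 0 ^ 2 ≤ 1 := by have := sq_le_sq' (abs_le.mp (hv 0)).1 (abs_le.mp (hv 0)).2; simpa using this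
        have := mul_le_mul_of_nonneg_right this (fr_nonneg (mean k (fun ω => x (b, ω)) - m))
        have h2 := (ih' b).2
        simp only [Matrix.mul_zero, tr, trace_zero, Complex.zero_re]
        linarith
      have g2 := fr_paral (mean k (fun ω => x (false, ω))) (mean k (fun ω => x (true, ω)))
      rw [← mean_succ, ← hm] at g2
      have a1 := g1 false; have a2 := g1 true
      linarith

lemma mean_tr_left {d : ℕ} (A : Matrix (Fin d) (Fin d) ℂ) (K : ℕ) (x : Om K → Matrix (Fin d) (Fin d) ℂ) :
    mean K (fun ω => tr (x ω * A)) = tr (mean K x * A) := by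
  simp only [tr_comm _ A]; exact mean_tr A K x

lemma TT_adj {d : ℕ} (K : ℕ) : ∀ (v : ℕ → ℝ) (x w : Om K → Matrix (Fin d) (Fin d) ℂ),
    mean K (fun ω => tr (TT K v x ω * w ω)) = mean K (fun ω => tr (x ω * TT K v w ω)) := by
  induction K with
  | zero => intro v x w; simp [mean, TT, tr]
  | succ k ih =>
    intro v x w
    simp only [mean_succ (E := ℝ), TT_succ, Matrix.add_mul, Matrix.mul_add, tr_add, mean_add, ih,
      Matrix.smul_mul, Matrix.mul_smul, tr_smul, mean_mul, mean_tr, mean_tr_left]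
    congr 1
    simp only [mean_succ, Matrix.sub_mul, Matrix.mul_sub, tr_sub, Matrix.smul_mul, Matrix.mul_smul, tr_smul,
      Matrix.add_mul, Matrix.mul_add, tr_add]
    ring

lemma np_of {d : ℕ} {A U V : Matrix (Fin d) (Fin d) ℂ} (hU : IsU U) (hV : IsU V) {e : Fin d → ℝ}
    (he : ∀ i, 0 ≤ e i) (h : A = U * dg e * V) (p : ℝ) : np p A = ∑ i, e i ^ p :=
  sv_sum hU hV e he h (fun s => s ^ p)

lemma np_unitary {d : ℕ} {A U V : Matrix (Fin d) (Fin d) ℂ} (hU : IsU U) (hV : IsU V) (p : ℝ) :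
    np p (U * A * V) = np p A := by
  obtain ⟨U', V', hU', hV', h⟩ := exists_svd A
  refine np_of (hU.mul hU') (hV'.mul hV) (sv_nonneg A) ?_ p
  conv_lhs => rw [h]
  simp only [Matrix.mul_assoc]

lemma np_ct {d : ℕ} (A : Matrix (Fin d) (Fin d) ℂ) (p : ℝ) : np p Aᴴ = np p A := by
  obtain ⟨U', V', hU', hV', h⟩ := exists_svd A
  refine np_of hV'.ct hU'.ct (sv_nonneg A) ?_ p
  conv_lhs => rw [h]
  simp only [conjTranspose_mul, dg_ct, Matrix.mul_assoc]

lemma np_csmul {d : ℕ} (A : Matrix (Fin d) (Fin d) ℂ) (p : ℝ) (c : ℂ) (hc : ‖c‖ = 1) : np p (c • A) = np p A := by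
  have hU : IsU (c • (1 : Matrix (Fin d) (Fin d) ℂ)) := by
    unfold IsU
    rw [conjTranspose_smul, Matrix.smul_mul, Matrix.mul_smul, smul_smul, conjTranspose_one, Matrix.one_mul]
    rw [Complex.star_def, Complex.conj_mul', hc]; simp
  have := np_unitary (A := A) hU isU_one p
  simpa using this

lemma np_smul {d : ℕ} (A : Matrix (Fin d) (Fin d) ℂ) {p c : ℝ} (hc : 0 ≤ c) : np p (c • A) = c ^ p * np p A := by
  obtain ⟨U', V', hU', hV', h⟩ := exists_svd A
  have : np p (c • A) = ∑ i, (c * singularValues A i) ^ p := by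
    refine np_of hU' hV' (fun i => mul_nonneg hc (sv_nonneg A i)) ?_ p
    conv_lhs => rw [h]
    rw [← Matrix.smul_mul, ← Matrix.mul_smul]
    congr 2
    ext i k
    simp [dg, diagonal_apply]
  rw [this, np, Finset.mul_sum]
  exact Finset.sum_congr rfl fun i _ => Real.mul_rpow hc (sv_nonneg A i)

lemma np_herm {d : ℕ} {U : Matrix (Fin d) (Fin d) ℂ} (hU : IsU U) (e : Fin d → ℝ) (p : ℝ) :
    np p (U * dg e * Uᴴ) = ∑ i, |e i| ^ p := by
  let s : Fin d → ℝ := fun i => if 0 ≤ e i then 1 else -1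
  have hs : IsU (dg s) := by
    unfold IsU
    rw [dg_ct, dg_mul]
    have : (fun i => s i * s i) = fun _ => (1 : ℝ) := by
      funext i; simp only [s]; split_ifs <;> norm_num
    rw [this]; simp [dg]
  refine np_of hU (hs.mul hU.ct) (fun i => abs_nonneg (e i)) ?_ p
  rw [Matrix.mul_assoc, Matrix.mul_assoc, ← Matrix.mul_assoc (dg _) (dg s), dg_mul]
  congr 3
  funext i
  simp only [s]
  split_ifs with h
  · rw [abs_of_nonneg h, mul_one]
  · rw [abs_of_neg (not_le.mp h)]; ring

lemma row_sum {d : ℕ} {A : Matrix (Fin d) (Fin d) ℂ} (hA : IsU A) (i : Fin d) : ∑ k, ‖A i k‖ ^ 2 = 1 := by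
  have := congrFun (congrFun hA.right i) i
  rw [Matrix.mul_apply, one_apply_eq] at this
  have h2 : ((∑ k, ‖A i k‖ ^ 2 : ℝ) : ℂ) = 1 := by
    push_cast
    rw [← this]
    refine Finset.sum_congr rfl fun k _ => ?_
    rw [conjTranspose_apply, Complex.star_def, Complex.mul_conj']
  exact_mod_cast h2

lemma col_sum {d : ℕ} {A : Matrix (Fin d) (Fin d) ℂ} (hA : IsU A) (i : Fin d) : ∑ k, ‖A k i‖ ^ 2 = 1 := by
  have := row_sum hA.ct i
  simpa [conjTranspose_apply] using this

lemma young_mat {d : ℕ} (x y : Matrix (Fin d) (Fin d) ℂ) {p q : ℝ} (hpq : p.HolderConjugate q) :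
    tr (x * y) ≤ np p x / p + np q y / q := by
  obtain ⟨U, V, hU, hV, h⟩ := exists_svd x
  obtain ⟨U', V', hU', hV', h'⟩ := exists_svd y
  set s := singularValues x with hs
  set r := singularValues y with hr
  have hs0 : ∀ i, 0 ≤ s i := sv_nonneg x
  have hr0 : ∀ i, 0 ≤ r i := sv_nonneg y
  have hA := hV.mul hU'
  have hB := hV'.mul hU
  set A := V * U'
  set B := V' * U
  have e1 : tr (x * y) = tr (dg s * A * (dg r * B)) := by
    rw [h, h']
    have : U * dg s * V * (U' * dg r * V') = U * (dg s * A * (dg r * V')) := by simp only [A, Matrix.mul_assoc]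
    rw [this, tr_comm]; simp only [B, Matrix.mul_assoc]
  have e2 : tr (x * y) = ∑ i, ∑ k, s i * r k * (A i k * B k i).re := by
    rw [e1]
    simp only [tr, trace, diag_apply, Matrix.mul_apply (M := dg s * A), Complex.re_sum]
    refine Finset.sum_congr rfl fun i _ => Finset.sum_congr rfl fun k _ => ?_
    rw [dg, dg, diagonal_mul, diagonal_mul]
    have : (s i : ℂ) * A i k * ((r k : ℂ) * B k i) = ((s i * r k : ℝ) : ℂ) * (A i k * B k i) := by push_cast; ring
    rw [this, Complex.re_ofReal_mul]
  have e3 : ∀ i k, s i * r k * (A i k * B k i).re ≤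
      (s i ^ p / p) * (‖A i k‖ ^ 2 / 2 + ‖B k i‖ ^ 2 / 2) + (r k ^ q / q) * (‖A i k‖ ^ 2 / 2 + ‖B k i‖ ^ 2 / 2) := by
    intro i k
    have h1 : (A i k * B k i).re ≤ ‖A i k‖ ^ 2 / 2 + ‖B k i‖ ^ 2 / 2 := by
      have := Complex.re_le_norm (A i k * B k i)
      rw [norm_mul] at this
      nlinarith [sq_nonneg (‖A i k‖ - ‖B k i‖)]
    have h2 := Real.young_inequality_of_nonneg (hs0 i) (hr0 k) hpq
    calc _ ≤ s i * r k * (‖A i k‖ ^ 2 / 2 + ‖B k i‖ ^ 2 / 2) :=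
          mul_le_mul_of_nonneg_left h1 (mul_nonneg (hs0 i) (hr0 k))
      _ ≤ (s i ^ p / p + r k ^ q / q) * (‖A i k‖ ^ 2 / 2 + ‖B k i‖ ^ 2 / 2) :=
          mul_le_mul_of_nonneg_right h2 (by positivity)
      _ = _ := by ring
  rw [e2]
  refine (Finset.sum_le_sum fun i _ => Finset.sum_le_sum fun k _ => e3 i k).trans ?_
  simp only [Finset.sum_add_distrib]
  refine le_of_eq ?_
  congr 1
  · simp only [← Finset.mul_sum, Finset.sum_add_distrib, ← Finset.sum_div, row_sum hA, col_sum hB]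
    norm_num [np, ← Finset.sum_div]
    rfl
  · rw [Finset.sum_comm]
    simp only [← Finset.mul_sum, Finset.sum_add_distrib, ← Finset.sum_div, col_sum hA, row_sum hB]
    norm_num [np, ← Finset.sum_div]
    rfl

lemma norming {d : ℕ} (z : Matrix (Fin d) (Fin d) ℂ) {p q : ℝ} (hpq : p.HolderConjugate q) :
    ∃ w : Matrix (Fin d) (Fin d) ℂ, tr (z * w) = np p z ∧ np q w = np p z := by
  obtain ⟨U, V, hU, hV, h⟩ := exists_svd z
  set s := singularValues z with hs
  have hs0 : ∀ i, 0 ≤ s i := sv_nonneg z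
  refine ⟨Vᴴ * dg (fun i => s i ^ (p - 1)) * Uᴴ, ?_, ?_⟩
  · have : tr (z * (Vᴴ * dg (fun i => s i ^ (p - 1)) * Uᴴ)) = tr (dg (fun i => s i * s i ^ (p - 1))) := by
      rw [h, ← dg_mul]
      calc _ = tr (U * (dg s * (V * Vᴴ) * dg (fun i => s i ^ (p - 1)) * Uᴴ)) := by simp only [Matrix.mul_assoc]
        _ = tr (dg s * dg (fun i => s i ^ (p - 1)) * (Uᴴ * U)) := by
          rw [tr_comm, hV.right, Matrix.mul_one]; simp only [Matrix.mul_assoc]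
        _ = _ := by rw [hU, Matrix.mul_one]
    rw [this]
    simp only [tr, dg, trace_diagonal, Complex.re_sum, Complex.ofReal_re, np]
    refine Finset.sum_congr rfl fun i _ => ?_
    rcases (hs0 i).eq_or_lt with h0 | h0
    · rw [← hs, ← h0, Real.zero_rpow hpq.ne_zero, zero_mul]
    · rw [← hs]
      nth_rewrite 1 [← Real.rpow_one (s i)]
      rw [← Real.rpow_add h0]; congr 1; ring
  · rw [np_of hV.ct hU.ct (fun i => Real.rpow_nonneg (hs0 i) _) rfl q]
    refine Finset.sum_congr rfl fun i _ => ?_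
    rw [← Real.rpow_mul (hs0 i), hpq.sub_one_mul_conj]

/-- strong type at exponent `p` with constant `c` -/
def Strong (d K : ℕ) (v : ℕ → ℝ) (p c : ℝ) : Prop := ∀ x : Om K → Matrix (Fin d) (Fin d) ℂ,
  mean K (fun ω => np p (TT K v x ω)) ≤ c * mean K (fun ω => np p (x ω))

lemma strong_dual {d K : ℕ} {v : ℕ → ℝ} {p q c : ℝ} (hpq : p.HolderConjugate q) (hc : 0 < c)
    (h : Strong d K v q c) : Strong d K v p ((c) ^ (p - 1)) := by
  intro x
  choose w hw1 hw2 using fun ω => norming (TT K v x ω) hpq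
  set t := c ^ (1 / q) with ht
  have htp : 0 < t := by positivity
  have e1 : t ^ p = c ^ (p - 1) := by
    rw [ht, ← Real.rpow_mul hc.le]; congr 1
    have := hpq.div_conj_eq_sub_one
    rw [← this]; ring
  have e2 : (t⁻¹) ^ q * c = 1 := by
    rw [ht, Real.inv_rpow (by positivity), ← Real.rpow_mul hc.le, one_div, inv_mul_cancel₀ hpq.symm.ne_zero, Real.rpow_one,
      inv_mul_cancel₀ hc.ne']
  have h1 : mean K (fun ω => np p (TT K v x ω)) = mean K (fun ω => tr (x ω * TT K v w ω)) := by
    rw [← TT_adj]; simp only [hw1]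
  have h2 : ∀ ω, tr (x ω * TT K v w ω) ≤ (t ^ p / p) * np p (x ω) + ((t⁻¹) ^ q / q) * np q (TT K v w ω) := by
    intro ω
    have := young_mat (t • x ω) (t⁻¹ • TT K v w ω) hpq
    rw [np_smul _ htp.le, np_smul _ (inv_nonneg.mpr htp.le), Matrix.smul_mul, Matrix.mul_smul, smul_smul,
      mul_inv_cancel₀ htp.ne', one_smul] at this
    refine this.trans (le_of_eq (by ring))
  have h3 := mean_mono K h2
  rw [mean_add, mean_mul, mean_mul, ← h1] at h3
  have h4 := h w
  simp only [hw2] at h4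
  set N := mean K (fun ω => np p (TT K v x ω))
  have hq := hpq.symm.pos
  have hp := hpq.pos
  have h5 : ((t⁻¹) ^ q / q) * mean K (fun ω => np q (TT K v w ω)) ≤ N / q := by
    calc _ ≤ ((t⁻¹) ^ q / q) * (c * N) := mul_le_mul_of_nonneg_left h4 (by positivity)
      _ = ((t⁻¹) ^ q * c) * N / q := by ring
      _ = _ := by rw [e2, one_mul]
  have h6 : N * (1 - 1 / q) ≤ t ^ p / p * mean K (fun ω => np p (x ω)) := by
    have : N * (1 - 1 / q) = N - N / q := by ring
    linarith
  have h7 : 1 - 1 / q = 1 / p := by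
    have := hpq.inv_add_inv_eq_one
    simp only [one_div]; linarith
  rw [h7, e1] at h6
  calc N = (N * (1 / p)) * p := by field_simp
    _ ≤ (c ^ (p - 1) / p * mean K (fun ω => np p (x ω))) * p := mul_le_mul_of_nonneg_right h6 hp.le
    _ = _ := by field_simp

open MeasureTheory in
lemma lc_low {p σ : ℝ} (hp : 0 < p) (hσ : 0 ≤ σ) :
    IntegrableOn (fun s : ℝ => s ^ (p - 1) * (if s < σ then (1 : ℝ) else 0)) (Set.Ioi 0) ∧
    ∫ s in Set.Ioi (0 : ℝ), s ^ (p - 1) * (if s < σ then (1 : ℝ) else 0) = σ ^ p / p := by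
  have e : (fun s : ℝ => s ^ (p - 1) * (if s < σ then (1 : ℝ) else 0)) = Set.indicator (Set.Iio σ) (fun s => s ^ (p - 1)) := by
    funext s; simp [Set.indicator_apply]
  have hi : IntegrableOn (fun s : ℝ => s ^ (p - 1)) (Set.Ioo 0 σ) := by
    have := (intervalIntegral.intervalIntegrable_rpow' (a := 0) (b := σ) (r := p - 1) (by linarith))
    rw [intervalIntegrable_iff_integrableOn_Ioo_of_le hσ] at this
    exact this
  have es : Set.Iio σ ∩ Set.Ioi 0 = Set.Ioo 0 σ := by ext; simp [and_comm]
  constructor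
  · rw [e, IntegrableOn, integrable_indicator_iff measurableSet_Iio, IntegrableOn, Measure.restrict_restrict measurableSet_Iio, es]
    exact hi
  · rw [e, integral_indicator measurableSet_Iio, Measure.restrict_restrict measurableSet_Iio, es,
      ← integral_Ioc_eq_integral_Ioo, ← intervalIntegral.integral_of_le hσ, integral_rpow (Or.inl (by linarith))]
    simp [Real.zero_rpow hp.ne']

open MeasureTheory in
lemma lc_high {p e : ℝ} (hp : p < 0) (he : 0 < e) :
    IntegrableOn (fun s : ℝ => s ^ (p - 1) * (if e ≤ s then (1 : ℝ) else 0)) (Set.Ioi 0) ∧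
    ∫ s in Set.Ioi (0 : ℝ), s ^ (p - 1) * (if e ≤ s then (1 : ℝ) else 0) = e ^ p / (-p) := by
  have h : (fun s : ℝ => s ^ (p - 1) * (if e ≤ s then (1 : ℝ) else 0)) = Set.indicator (Set.Ici e) (fun s => s ^ (p - 1)) := by
    funext s; simp [Set.indicator_apply]
  have hi : IntegrableOn (fun s : ℝ => s ^ (p - 1)) (Set.Ioi e) := integrableOn_Ioi_rpow_of_lt (by linarith) he
  have es : Set.Ici e ∩ Set.Ioi 0 = Set.Ici e := by
    ext x; simp; intro h; linarith
  constructor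
  · rw [h, IntegrableOn, integrable_indicator_iff measurableSet_Ici, IntegrableOn, Measure.restrict_restrict measurableSet_Ici, es]
    exact (integrableOn_Ici_iff_integrableOn_Ioi (by simp)).mpr hi
  · rw [h, integral_indicator measurableSet_Ici, Measure.restrict_restrict measurableSet_Ici, es,
      integral_Ici_eq_integral_Ioi, integral_Ioi_rpow_of_lt (by linarith) he]
    simp only [sub_add_cancel]
    rw [div_neg, neg_div]

open MeasureTheory in
lemma mean_int {K : ℕ} {f : Om K → ℝ → ℝ} {S : Set ℝ} (h : ∀ ω, IntegrableOn (f ω) S) :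
    IntegrableOn (fun s => mean K (fun ω => f ω s)) S ∧
    ∫ s in S, mean K (fun ω => f ω s) = mean K (fun ω => ∫ s in S, f ω s) := by
  induction K with
  | zero => exact ⟨h (), rfl⟩
  | succ k ih =>
    obtain ⟨a1, a2⟩ := ih (fun ω => h (false, ω))
    obtain ⟨b1, b2⟩ := ih (fun ω => h (true, ω))
    simp only [mean_succ, smul_eq_mul]
    refine ⟨(a1.add b1).const_mul _, ?_⟩
    rw [integral_const_mul, integral_add a1 b1, a2, b2]

open MeasureTheory in
lemma cnt_int {d : ℕ} (A : Matrix (Fin d) (Fin d) ℂ) {p c : ℝ} (hp : 0 < p) (hc : 0 < c) :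
    IntegrableOn (fun s : ℝ => s ^ (p - 1) * (cnt A (c * s) : ℝ)) (Set.Ioi 0) ∧
    ∫ s in Set.Ioi (0 : ℝ), s ^ (p - 1) * (cnt A (c * s) : ℝ) = np p A / (c ^ p * p) := by
  have e : (fun s : ℝ => s ^ (p - 1) * (cnt A (c * s) : ℝ)) = fun s => ∑ i, s ^ (p - 1) *
      (if s < singularValues A i / c then (1 : ℝ) else 0) := by
    funext s
    rw [cnt_eq_sum, Finset.mul_sum]
    refine Finset.sum_congr rfl fun i _ => ?_
    congr 2
    rw [lt_div_iff₀ hc, mul_comm]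
  have h := fun i => lc_low hp (div_nonneg (sv_nonneg A i) hc.le)
  rw [e]
  refine ⟨integrable_finsetSum _ fun i _ => (h i).1, ?_⟩
  rw [integral_finsetSum _ fun i _ => (h i).1]
  simp only [(h _).2, np, Finset.sum_div]
  refine Finset.sum_congr rfl fun i _ => ?_
  rw [Real.div_rpow (sv_nonneg A i) hc.le]
  field_simp

lemma np_add {d : ℕ} (A B : Matrix (Fin d) (Fin d) ℂ) {p : ℝ} (hp : 0 < p) :
    np p (A + B) ≤ 2 ^ p * (np p A + np p B) := by
  have h0 := cnt_int (A + B) hp (c := 2) (by norm_num)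
  have h1 := cnt_int A hp (c := 1) (by norm_num)
  have h2 := cnt_int B hp (c := 1) (by norm_num)
  have h3 := MeasureTheory.setIntegral_mono_on h0.1 (h1.1.add h2.1) measurableSet_Ioi (fun s hs => by
    have hs : (0 : ℝ) < s := hs
    have := cnt_add A B hs.le hs.le
    have h4 : (cnt (A + B) (2 * s) : ℝ) ≤ cnt A (1 * s) + cnt B (1 * s) := by
      rw [two_mul, one_mul]; exact_mod_cast this
    calc _ ≤ s ^ (p - 1) * ((cnt A (1 * s) : ℝ) + cnt B (1 * s)) :=
          mul_le_mul_of_nonneg_left h4 (Real.rpow_nonneg hs.le _)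
      _ = _ := by simp only [Pi.add_apply]; ring)
  rw [h0.2] at h3
  simp only [Pi.add_apply] at h3
  rw [MeasureTheory.integral_add h1.1 h2.1, h1.2, h2.2, Real.one_rpow, one_mul, ← add_div, div_le_div_iff₀ (by positivity) hp] at h3
  have : np p (A + B) * p ≤ (2 ^ p * (np p A + np p B)) * p := by linarith
  exact le_of_mul_le_mul_right this hp

/-- strong type on positive functions -/
def PStrong (d K : ℕ) (v : ℕ → ℝ) (p c : ℝ) : Prop := ∀ x : Om K → Matrix (Fin d) (Fin d) ℂ,
  (∀ ω, (x ω).PosSemidef) → mean K (fun ω => np p (TT K v x ω)) ≤ c * mean K (fun ω => np p (x ω))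

lemma cut {d K : ℕ} {v : ℕ → ℝ} (hv : ∀ i, |v i| ≤ 1) {r c : ℝ} (hr : 0 < r) (h : PStrong d K v r c)
    (U : Om K → Matrix (Fin d) (Fin d) ℂ) (hU : ∀ ω, IsU (U ω)) (e : Om K → Fin d → ℝ) (he : ∀ ω i, 0 ≤ e ω i)
    {s : ℝ} (hs : 0 < s) :
    mean K (fun ω => (cnt (TT K v (fun ω => U ω * dg (e ω) * (U ω)ᴴ) ω) (2 * s) : ℝ)) ≤
      4 / s * mean K (fun ω => ∑ i, e ω i * (if s < e ω i then 1 else 0)) +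
      c / s ^ r * mean K (fun ω => ∑ i, e ω i ^ r * (if e ω i ≤ s then 1 else 0)) := by
  let e1 : Om K → Fin d → ℝ := fun ω i => e ω i * (if s < e ω i then 1 else 0)
  let e2 : Om K → Fin d → ℝ := fun ω i => e ω i * (if e ω i ≤ s then 1 else 0)
  have he1 : ∀ ω i, 0 ≤ e1 ω i := fun ω i => mul_nonneg (he ω i) (by split_ifs <;> norm_num)
  have he2 : ∀ ω i, 0 ≤ e2 ω i := fun ω i => mul_nonneg (he ω i) (by split_ifs <;> norm_num)
  set a : Om K → Matrix (Fin d) (Fin d) ℂ := fun ω => U ω * dg (e1 ω) * (U ω)ᴴ with ha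
  set b : Om K → Matrix (Fin d) (Fin d) ℂ := fun ω => U ω * dg (e2 ω) * (U ω)ᴴ with hb
  have hab : (fun ω => U ω * dg (e ω) * (U ω)ᴴ) = fun ω => a ω + b ω := by
    funext ω
    simp only [ha, hb]
    rw [← Matrix.add_mul, ← Matrix.mul_add]
    congr 2
    simp only [dg, diagonal_add]
    congr 1; funext i
    simp only [e1, e2]
    by_cases h : s < e ω i
    · simp [h, not_le.mpr h]
    · simp [h, not_lt.mp h]
  have hc : ∀ ω, (cnt (TT K v (fun ω => U ω * dg (e ω) * (U ω)ᴴ) ω) (2 * s) : ℝ) ≤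
      cnt (TT K v a ω) s + 1 / s ^ r * np r (TT K v b ω) := by
    intro ω
    rw [hab, TT_add, two_mul]
    have h1 : (cnt (TT K v a ω + TT K v b ω) (s + s) : ℝ) ≤ cnt (TT K v a ω) s + cnt (TT K v b ω) s := by
      exact_mod_cast cnt_add _ _ hs.le hs.le
    have h2 := cnt_le_np (TT K v b ω) hs hr
    have h3 : (cnt (TT K v b ω) s : ℝ) ≤ 1 / s ^ r * np r (TT K v b ω) := by
      rw [one_div, inv_mul_eq_div, le_div_iff₀ (by positivity)]; exact h2
    linarith
  have h1 := mean_mono K hc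
  rw [mean_add, mean_mul] at h1
  have h2 := weak_type K v hv a (fun ω => psd_dg (he1 ω)) hs
  have h3 := h b (fun ω => psd_dg (he2 ω))
  have t1 : ∀ ω, tr (a ω) = ∑ i, e ω i * (if s < e ω i then 1 else 0) := by
    intro ω
    simp only [ha]
    rw [tr_comm, ← Matrix.mul_assoc, hU ω, Matrix.one_mul]
    simp only [tr, dg, trace_diagonal, Complex.re_sum, Complex.ofReal_re, e1]
  have t2 : ∀ ω, np r (b ω) = ∑ i, e ω i ^ r * (if e ω i ≤ s then 1 else 0) := by
    intro ω
    rw [np_of (hU ω) (hU ω).ct (he2 ω) rfl]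
    refine Finset.sum_congr rfl fun i _ => ?_
    simp only [e2]
    split_ifs
    · simp
    · simp [Real.zero_rpow hr.ne']
  simp only [t1] at h2
  simp only [t2] at h3
  have h4 := mul_le_mul_of_nonneg_left h3 (show 0 ≤ 1 / s ^ r by positivity)
  calc _ ≤ _ := h1
    _ ≤ _ := add_le_add h2 h4
    _ = _ := by ring

lemma marc {d K : ℕ} {v : ℕ → ℝ} (hv : ∀ i, |v i| ≤ 1) {r c p : ℝ} (hp : 1 < p) (hr : p < r) (h : PStrong d K v r c) :
    PStrong d K v p (2 ^ p * p * (4 / (p - 1) + c / (r - p))) := by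
  intro x hx
  choose U hU hd using fun ω => herm_diag (hx ω).isHermitian
  set e : Om K → Fin d → ℝ := fun ω => (hx ω).isHermitian.eigenvalues with he
  have he0 : ∀ ω i, 0 ≤ e ω i := fun ω i => (hx ω).eigenvalues_nonneg i
  have hxe : x = fun ω => U ω * dg (e ω) * (U ω)ᴴ := funext hd
  have hp0 : 0 < p := by linarith
  have L := mean_int (fun ω => (cnt_int (TT K v x ω) hp0 (c := 2) (by norm_num)).1)
  have A1 : ∀ ω, MeasureTheory.IntegrableOn (fun s : ℝ => ∑ i, e ω i * (s ^ (p - 1 - 1) * (if s < e ω i then (1 : ℝ) else 0))) (Set.Ioi 0)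
    ∧ ∫ s in Set.Ioi (0 : ℝ), ∑ i, e ω i * (s ^ (p - 1 - 1) * (if s < e ω i then (1 : ℝ) else 0)) = 1 / (p - 1) * np p (x ω) := by
    intro ω
    have := fun i => lc_low (p := p - 1) (by linarith) (he0 ω i)
    refine ⟨MeasureTheory.integrable_finsetSum _ fun i _ => (this i).1.const_mul _, ?_⟩
    rw [MeasureTheory.integral_finsetSum _ fun i _ => (this i).1.const_mul _]
    simp only [MeasureTheory.integral_const_mul, (this _).2]
    rw [np_of (hU ω) (hU ω).ct (he0 ω) (hd ω), Finset.mul_sum]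
    refine Finset.sum_congr rfl fun i _ => ?_
    rcases (he0 ω i).eq_or_lt with h0 | h0
    · rw [← h0, Real.zero_rpow hp0.ne']; simp
    · rw [Real.rpow_sub_one h0.ne']; field_simp
  have A2 : ∀ ω, MeasureTheory.IntegrableOn (fun s : ℝ => ∑ i, e ω i ^ r * (s ^ (p - r - 1) * (if e ω i ≤ s then (1 : ℝ) else 0))) (Set.Ioi 0)
    ∧ ∫ s in Set.Ioi (0 : ℝ), ∑ i, e ω i ^ r * (s ^ (p - r - 1) * (if e ω i ≤ s then (1 : ℝ) else 0)) = 1 / (r - p) * np p (x ω) := by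
    intro ω
    have : ∀ i, MeasureTheory.IntegrableOn (fun s : ℝ => e ω i ^ r * (s ^ (p - r - 1) * (if e ω i ≤ s then (1 : ℝ) else 0))) (Set.Ioi 0)
        ∧ ∫ s in Set.Ioi (0 : ℝ), e ω i ^ r * (s ^ (p - r - 1) * (if e ω i ≤ s then (1 : ℝ) else 0)) = 1 / (r - p) * e ω i ^ p := by
      intro i
      rcases (he0 ω i).eq_or_lt with h0 | h0
      · rw [← h0, Real.zero_rpow hp0.ne', Real.zero_rpow (by linarith)]; simp
      · have := lc_high (p := p - r) (by linarith) h0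
        refine ⟨this.1.const_mul _, ?_⟩
        rw [MeasureTheory.integral_const_mul, this.2, neg_sub, Real.rpow_sub h0]
        have := Real.rpow_pos_of_pos h0 r
        field_simp
    refine ⟨MeasureTheory.integrable_finsetSum _ fun i _ => (this i).1, ?_⟩
    rw [MeasureTheory.integral_finsetSum _ fun i _ => (this i).1]
    simp only [(this _).2]
    rw [np_of (hU ω) (hU ω).ct (he0 ω) (hd ω), Finset.mul_sum]
  have B1 := mean_int (fun ω => (A1 ω).1)
  have B2 := mean_int (fun ω => (A2 ω).1)
  have M := MeasureTheory.setIntegral_mono_on L.1 ((B1.1.const_mul 4).add (B2.1.const_mul c)) measurableSet_Ioi (fun s hs => by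
    have hs : (0 : ℝ) < s := hs
    have := cut hv (by linarith : 0 < r) h U hU e he0 hs
    rw [← hxe] at this
    simp only [Pi.add_apply]
    rw [mean_mul]
    refine (mul_le_mul_of_nonneg_left this (Real.rpow_nonneg hs.le (p - 1))).trans (le_of_eq ?_)
    have q1 : mean K (fun ω => ∑ i, e ω i * (s ^ (p - 1 - 1) * (if s < e ω i then (1 : ℝ) else 0))) =
        s ^ (p - 1) / s * mean K (fun ω => ∑ i, e ω i * (if s < e ω i then 1 else 0)) := by
      rw [← mean_mul]; congr 1; funext ω
      rw [Finset.mul_sum]; refine Finset.sum_congr rfl fun i _ => ?_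
      rw [Real.rpow_sub_one hs.ne']; ring
    have q2 : mean K (fun ω => ∑ i, e ω i ^ r * (s ^ (p - r - 1) * (if e ω i ≤ s then (1 : ℝ) else 0))) =
        s ^ (p - 1) / s ^ r * mean K (fun ω => ∑ i, e ω i ^ r * (if e ω i ≤ s then 1 else 0)) := by
      rw [← mean_mul]; congr 1; funext ω
      rw [Finset.mul_sum]; refine Finset.sum_congr rfl fun i _ => ?_
      rw [show p - r - 1 = (p - 1) - r by ring, Real.rpow_sub hs]; ring
    rw [q1, q2]; ring)
  rw [L.2] at M
  simp only [Pi.add_apply] at M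
  rw [MeasureTheory.integral_add (B1.1.const_mul 4) (B2.1.const_mul c)] at M
  simp only [MeasureTheory.integral_const_mul, B1.2, B2.2, A1, A2, (cnt_int _ hp0 (by norm_num : (0 : ℝ) < 2)).2] at M
  rw [mean_mul, mean_mul] at M
  have e0 : mean K (fun ω => np p (TT K v x ω) / (2 ^ p * p)) = 1 / (2 ^ p * p) * mean K (fun ω => np p (TT K v x ω)) := by
    rw [← mean_mul]; congr 1; funext ω; ring
  rw [e0] at M
  have hpp : 0 < (2 : ℝ) ^ p * p := by positivity
  calc _ = (2 ^ p * p) * (1 / (2 ^ p * p) * mean K (fun ω => np p (TT K v x ω))) := by field_simp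
    _ ≤ (2 ^ p * p) * (4 * (1 / (p - 1) * mean K fun ω => np p (x ω)) + c * (1 / (r - p) * mean K fun ω => np p (x ω))) :=
      mul_le_mul_of_nonneg_left M hpp.le
    _ = _ := by ring

lemma herm_split {d : ℕ} {A : Matrix (Fin d) (Fin d) ℂ} (hA : A.IsHermitian) {p : ℝ} (hp : 0 < p) :
    ∃ a b : Matrix (Fin d) (Fin d) ℂ, a.PosSemidef ∧ b.PosSemidef ∧ A = a - b ∧ np p a ≤ np p A ∧ np p b ≤ np p A := by
  obtain ⟨U, hU, h⟩ := herm_diag hA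
  set e := hA.eigenvalues
  refine ⟨U * dg (fun i => max (e i) 0) * Uᴴ, U * dg (fun i => max (-e i) 0) * Uᴴ, psd_dg (fun i => le_max_right _ _),
    psd_dg (fun i => le_max_right _ _), ?_, ?_, ?_⟩
  · rw [sand_sub]
    conv_lhs => rw [h]
    congr 3; funext i
    exact (max_zero_sub_eq_self (e i)).symm
  · rw [h, np_herm hU, np_herm hU]
    refine Finset.sum_le_sum fun i _ => Real.rpow_le_rpow (abs_nonneg _) ?_ hp.le
    rw [abs_of_nonneg (le_max_right _ _)]
    exact max_le (le_abs_self _) (abs_nonneg _)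
  · rw [h, np_herm hU, np_herm hU]
    refine Finset.sum_le_sum fun i _ => Real.rpow_le_rpow (abs_nonneg _) ?_ hp.le
    rw [abs_of_nonneg (le_max_right _ _)]
    exact max_le (neg_le_abs _) (abs_nonneg _)

lemma np_half {d : ℕ} (A B : Matrix (Fin d) (Fin d) ℂ) {p : ℝ} (hp : 0 < p) (h : np p B = np p A) :
    np p ((1 / 2 : ℝ) • (A + B)) ≤ 2 * np p A := by
  rw [np_smul _ (by norm_num)]
  have := np_add A B hp
  rw [h] at this
  calc _ ≤ (1 / 2 : ℝ) ^ p * (2 ^ p * (np p A + np p A)) := mul_le_mul_of_nonneg_left this (by positivity)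
    _ = ((1 / 2 : ℝ) * 2) ^ p * (2 * np p A) := by rw [Real.mul_rpow (by norm_num) (by norm_num)]; ring
    _ = _ := by norm_num

lemma np_neg {d : ℕ} (A : Matrix (Fin d) (Fin d) ℂ) (p : ℝ) : np p (-A) = np p A := by
  have := np_csmul A p (-1) (by simp)
  simpa using this

lemma split4 {d : ℕ} (A : Matrix (Fin d) (Fin d) ℂ) {p : ℝ} (hp : 0 < p) :
    ∃ a b c e : Matrix (Fin d) (Fin d) ℂ, a.PosSemidef ∧ b.PosSemidef ∧ c.PosSemidef ∧ e.PosSemidef ∧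
      A = (a - b) + Complex.I • (c - e) ∧ np p a ≤ 2 * np p A ∧ np p b ≤ 2 * np p A ∧ np p c ≤ 2 * np p A ∧
      np p e ≤ 2 * np p A := by
  have h1 : ((1 / 2 : ℝ) • (A + Aᴴ)).IsHermitian := by
    unfold IsHermitian
    simp [conjTranspose_smul, conjTranspose_add, add_comm]
  have h2 : ((1 / 2 : ℝ) • ((-Complex.I) • A + (Complex.I) • Aᴴ)).IsHermitian := by
    unfold IsHermitian
    simp [conjTranspose_smul, conjTranspose_add, add_comm]
  obtain ⟨a, b, ha, hb, hab, na, nb⟩ := herm_split h1 hp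
  obtain ⟨c, e, hc, he, hce, nc, ne⟩ := herm_split h2 hp
  have n1 := np_half A Aᴴ hp (np_ct A p)
  have n2 := np_half ((-Complex.I) • A) (Complex.I • Aᴴ) hp (by
    rw [np_csmul _ _ _ (by simp), np_csmul _ _ _ (by simp), np_ct])
  rw [np_csmul _ _ _ (by simp)] at n2
  refine ⟨a, b, c, e, ha, hb, hc, he, ?_, na.trans n1, nb.trans n1, nc.trans n2, ne.trans n2⟩
  rw [← hab, ← hce]
  ext i k
  simp only [Matrix.add_apply, Matrix.smul_apply, smul_eq_mul, Complex.real_smul]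
  push_cast
  linear_combination ((1 / 2 : ℂ) * (A i k - Aᴴ i k)) * Complex.I_mul_I

lemma p_to_strong {d K : ℕ} {v : ℕ → ℝ} {p c : ℝ} (hp : 0 < p) (hc : 0 ≤ c) (h : PStrong d K v p c) :
    Strong d K v p (8 * 4 ^ p * c) := by
  intro x
  choose a b f e ha hb hf he hx na nb nf ne using fun ω => split4 (x ω) hp
  have hT : ∀ ω, TT K v x ω = (TT K v a ω + -TT K v b ω) + Complex.I • (TT K v f ω + -TT K v e ω) := by
    intro ω
    have e1 : x = fun ω => (a ω + -(b ω)) + (LinearMap.lsmul ℂ (Matrix (Fin d) (Fin d) ℂ) Complex.I).restrictScalars ℝ (f ω + -e ω) := by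
      funext ω; rw [hx ω]; simp [sub_eq_add_neg]
    have e2 : ∀ y : Om K → Matrix (Fin d) (Fin d) ℂ, TT K v (fun ω => -(y ω)) ω = -(TT K v y ω) := fun y => by
      have := TT_map (-(LinearMap.id : Matrix (Fin d) (Fin d) ℂ →ₗ[ℝ] _)) K v y ω
      simpa using this
    rw [e1, TT_add, TT_map, TT_add, TT_add, e2, e2]
    rfl
  have h1 : ∀ ω, np p (TT K v x ω) ≤ 4 ^ p * (np p (TT K v a ω) + np p (TT K v b ω) + np p (TT K v f ω) + np p (TT K v e ω)) := by
    intro ω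
    rw [hT]
    refine (np_add _ _ hp).trans ?_
    rw [np_csmul _ _ _ (by simp)]
    have h2 := np_add (TT K v a ω) (-TT K v b ω) hp
    have h3 := np_add (TT K v f ω) (-TT K v e ω) hp
    rw [np_neg] at h2 h3
    have h4 : (4 : ℝ) ^ p = 2 ^ p * 2 ^ p := by rw [← Real.mul_rpow (by norm_num) (by norm_num)]; norm_num
    calc _ ≤ (2 : ℝ) ^ p * (2 ^ p * (np p (TT K v a ω) + np p (TT K v b ω)) + 2 ^ p * (np p (TT K v f ω) + np p (TT K v e ω))) :=
          mul_le_mul_of_nonneg_left (add_le_add h2 h3) (by positivity)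
      _ = _ := by rw [h4]; ring
  have h2 := mean_mono K h1
  rw [mean_mul, mean_add, mean_add, mean_add] at h2
  have key : ∀ y : Om K → Matrix (Fin d) (Fin d) ℂ, (∀ ω, (y ω).PosSemidef) → (∀ ω, np p (y ω) ≤ 2 * np p (x ω)) →
      mean K (fun ω => np p (TT K v y ω)) ≤ c * (2 * mean K (fun ω => np p (x ω))) := by
    intro y hy hn
    refine (h y hy).trans (mul_le_mul_of_nonneg_left ?_ hc)
    rw [← mean_mul]
    exact mean_mono K hn
  refine h2.trans ?_
  have := add_le_add (add_le_add (add_le_add (key a ha na) (key b hb nb)) (key f hf nf)) (key e he ne)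
  calc _ ≤ (4 : ℝ) ^ p * _ := mul_le_mul_of_nonneg_left this (by positivity)
    _ = _ := by ring

/-- main martingale transform bound -/
lemma mart_bound : ∃ C : ℝ, 1 ≤ C ∧ ∀ (p : ℝ), 1 < p → p ≤ 2 → ∀ (d K : ℕ) (v : ℕ → ℝ), (∀ i, |v i| ≤ 1) →
    Strong d K v p (C / (p - 1)) := by
  obtain ⟨C1, hC1, h1⟩ : ∃ C1 : ℝ, 0 < C1 ∧ ∀ (d K : ℕ) (v : ℕ → ℝ), (∀ i, |v i| ≤ 1) → Strong d K v (3 / 2) C1 := by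
    refine ⟨8 * 4 ^ (3 / 2 : ℝ) * (2 ^ (3 / 2 : ℝ) * (3 / 2) * (4 / (3 / 2 - 1) + 1 / (2 - 3 / 2))), by positivity, ?_⟩
    intro d K v hv
    apply p_to_strong (by norm_num) (by positivity)
    apply marc hv (by norm_num) (by norm_num)
    intro x hx
    simp only [np_two, one_mul]
    have := (l2_bound K v hv x).2
    have := fr_nonneg (mean K x)
    linarith
  set C2 := C1 ^ (3 - 1 : ℝ) with hC2
  have h2 : ∀ (d K : ℕ) (v : ℕ → ℝ), (∀ i, |v i| ≤ 1) → Strong d K v 3 C2 := fun d K v hv =>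
    strong_dual (q := 3 / 2) (Real.holderConjugate_iff.mpr ⟨by norm_num, by norm_num⟩) hC1 (h1 d K v hv)
  have hC2' : 0 < C2 := by positivity
  refine ⟨8 * 4 ^ (2 : ℝ) * (2 ^ (2 : ℝ) * 2 * (4 + C2)), ?_, ?_⟩
  · norm_num; nlinarith
  intro p hp hp2 d K v hv x
  have h3 : PStrong d K v 3 C2 := fun x _ => h2 d K v hv x
  have hc : 0 ≤ 2 ^ p * p * (4 / (p - 1) + C2 / (3 - p)) := by
    have : 0 < p - 1 := by linarith
    have : 0 < 3 - p := by linarith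
    positivity
  have h4 := p_to_strong (by linarith) hc (marc hv hp (by linarith) h3) x
  refine h4.trans (mul_le_mul_of_nonneg_right ?_ (mean_nonneg K fun ω => np_nonneg p _))
  have a1 : (4 : ℝ) ^ p ≤ 4 ^ (2 : ℝ) := Real.rpow_le_rpow_of_exponent_le (by norm_num) hp2
  have a2 : (2 : ℝ) ^ p ≤ 2 ^ (2 : ℝ) := Real.rpow_le_rpow_of_exponent_le (by norm_num) hp2
  have hp1 : 0 < p - 1 := by linarith
  have a3 : C2 / (3 - p) ≤ C2 / (p - 1) := div_le_div_of_nonneg_left hC2'.le hp1 (by linarith)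
  have a4 : 4 / (p - 1) + C2 / (3 - p) ≤ (4 + C2) / (p - 1) := by rw [add_div]; linarith
  have : 0 < 3 - p := by linarith
  calc 8 * 4 ^ p * (2 ^ p * p * (4 / (p - 1) + C2 / (3 - p))) ≤
      8 * 4 ^ (2 : ℝ) * (2 ^ (2 : ℝ) * 2 * ((4 + C2) / (p - 1))) := by gcongr
    _ = _ := by ring

noncomputable def ph : (K : ℕ) → (ℕ → ℝ) → Om K → ℂ
  | 0, _ => fun _ => 1
  | k + 1, g => fun ω => Complex.exp (Complex.I * (((if ω.1 then (1 : ℝ) else -1) * g 0 : ℝ) : ℂ)) * ph k (fun i => g (i + 1)) ω.2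

lemma ph_norm (K : ℕ) : ∀ (g : ℕ → ℝ) (ω : Om K), ‖ph K g ω‖ = 1 := by
  induction K with
  | zero => intro g ω; simp [ph]
  | succ k ih =>
    intro g ω
    simp only [ph, norm_mul, ih, mul_one]
    rw [mul_comm]; exact Complex.norm_exp_ofReal_mul_I _

lemma ph_sub (K : ℕ) : ∀ (g h : ℕ → ℝ) (ω : Om K), ph K (fun i => g i - h i) ω = ph K g ω * star (ph K h ω) := by
  induction K with
  | zero => intro g h ω; simp [ph]
  | succ k ih =>
    intro g h ω
    simp only [ph]
    rw [ih (fun i => g (i + 1)) (fun i => h (i + 1))]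
    simp only [Complex.star_def, map_mul, ← Complex.exp_conj, Complex.conj_I, Complex.conj_ofReal]
    have : Complex.exp (Complex.I * (((if ω.1 then (1 : ℝ) else -1) * (g 0 - h 0) : ℝ) : ℂ)) =
      Complex.exp (Complex.I * (((if ω.1 then (1 : ℝ) else -1) * g 0 : ℝ) : ℂ)) *
      Complex.exp (-Complex.I * (((if ω.1 then (1 : ℝ) else -1) * h 0 : ℝ) : ℂ)) := by
      rw [← Complex.exp_add]; congr 1; push_cast; ring
    rw [this]; ring

noncomputable def RR : ℕ → (ℕ → ℝ) → ℝ
  | 0, _ => 1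
  | k + 1, g => Real.cos (g 0) ^ 2 * RR k (fun i => g (i + 1))

noncomputable def PP : ℕ → (ℕ → ℝ) → ℝ
  | 0, _ => 1
  | k + 1, g => Real.cos (g 0) * PP k (fun i => g (i + 1))

noncomputable def SS : ℕ → (ℕ → ℝ) → (ℕ → ℝ) → ℝ
  | 0, _, _ => 0
  | k + 1, v, g => v 0 * Real.sin (g 0) ^ 2 * RR k (fun i => g (i + 1)) + SS k (fun i => v (i + 1)) (fun i => g (i + 1))

lemma RR_eq (K : ℕ) : ∀ g : ℕ → ℝ, RR K g = PP K g ^ 2 := by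
  induction K with
  | zero => intro g; simp [RR, PP]
  | succ k ih => intro g; simp only [RR, PP, ih]; ring

lemma mean_cmul (c : ℂ) (K : ℕ) (x : Om K → ℂ) : mean K (fun ω => c * x ω) = c * mean K x :=
  mean_map ((LinearMap.lsmul ℂ ℂ c).restrictScalars ℝ) K x

lemma TT_cmul (c : ℂ) (K : ℕ) (v : ℕ → ℝ) (x : Om K → ℂ) (ω : Om K) : TT K v (fun ω => c * x ω) ω = c * TT K v x ω :=
  TT_map ((LinearMap.lsmul ℂ ℂ c).restrictScalars ℝ) K v x ω

lemma mean_star (K : ℕ) (x : Om K → ℂ) : mean K (fun ω => star (x ω)) = star (mean K x) :=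
  mean_map (Complex.conjLIE.toLinearEquiv.toLinearMap) K x

lemma mean_ph (K : ℕ) : ∀ g : ℕ → ℝ, mean K (ph K g) = (PP K g : ℂ) := by
  induction K with
  | zero => intro g; simp [mean, ph, PP]
  | succ k ih =>
    intro g
    simp only [mean_succ, ph, PP, Bool.false_eq_true, if_false, if_true]
    rw [mean_cmul, mean_cmul]
    rw [show mean k (fun ω => ph k (fun i => g (i + 1)) ω) = _ from ih _]
    have : ((Real.cos (g 0) : ℝ) : ℂ) = (Complex.exp (Complex.I * ((-1 * g 0 : ℝ) : ℂ)) + Complex.exp (Complex.I * ((1 * g 0 : ℝ) : ℂ))) / 2 := by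
      rw [Complex.ofReal_cos, Complex.cos, add_comm]; congr 3 <;> push_cast <;> ring_nf
    push_cast at this ⊢
    simp only [Complex.real_smul]
    push_cast
    rw [this]; ring_nf

lemma mean_SS (K : ℕ) : ∀ (v g : ℕ → ℝ), mean K (fun ω => TT K v (ph K g) ω * star (ph K g ω)) = (SS K v g : ℂ) := by
  induction K with
  | zero => intro v g; simp [mean, TT, SS]
  | succ k ih =>
    intro v g
    set g' : ℕ → ℝ := fun i => g (i + 1) with hg'
    set v' : ℕ → ℝ := fun i => v (i + 1) with hv'
    let ee : Bool → ℂ := fun b => Complex.exp (Complex.I * (((if b then (1 : ℝ) else -1) * g 0 : ℝ) : ℂ))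
    have hee : ∀ b, ee b * star (ee b) = 1 := by
      intro b
      rw [Complex.star_def, Complex.mul_conj']
      simp only [ee]
      rw [mul_comm, Complex.norm_exp_ofReal_mul_I]; simp
    have hb : ∀ b, mean k (fun ω => TT (k + 1) v (ph (k + 1) g) (b, ω) * star (ph (k + 1) g (b, ω))) =
        v 0 * (1 - star (ee b) * Real.cos (g 0)) * (PP k g' : ℂ) ^ 2 + SS k v' g' := by
      intro b
      have e1 : ∀ ω, TT (k + 1) v (ph (k + 1) g) (b, ω) * star (ph (k + 1) g (b, ω)) =
          ((v 0 : ℂ) * (1 - star (ee b) * Real.cos (g 0)) * (PP k g' : ℂ)) * star (ph k g' ω) + TT k v' (ph k g') ω * star (ph k g' ω) := by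
        intro ω
        rw [TT_succ, mean_ph]
        have e2 : (fun ω' => ph (k + 1) g (b, ω')) = fun ω' => ee b * ph k g' ω' := rfl
        have e3 : ph (k + 1) g (b, ω) = ee b * ph k g' ω := rfl
        rw [e2, e3, TT_cmul, mean_cmul, show mean k (fun ω => ph k g' ω) = _ from mean_ph k g', star_mul', PP, Complex.real_smul]
        push_cast
        linear_combination (v 0 * (PP k g' : ℂ) * star (ph k g' ω) + TT k v' (ph k g') ω * star (ph k g' ω)) * hee b
      simp only [e1]
      rw [mean_add, mean_cmul, mean_star, show mean k (fun ω => ph k g' ω) = _ from mean_ph k g', ih, Complex.star_def, Complex.conj_ofReal]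
      ring
    rw [mean_succ, hb, hb, SS, RR_eq]
    have hcos : star (ee false) + star (ee true) = 2 * Complex.cos (g 0) := by
      simp only [ee, Complex.star_def, ← Complex.exp_conj, map_mul, Complex.conj_I, Complex.conj_ofReal, if_true, Bool.false_eq_true, if_false]
      rw [Complex.cos]
      push_cast; ring_nf
    have hs : (Complex.sin (g 0)) ^ 2 = 1 - Complex.cos (g 0) ^ 2 := by
      have := Complex.sin_sq_add_cos_sq (g 0); linear_combination this
    rw [Complex.real_smul]
    push_cast
    rw [hs]
    linear_combination (-(1 / 2 : ℂ) * v 0 * (PP k g' : ℂ) ^ 2 * Complex.cos (g 0)) * hcos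

def Good (d : ℕ) (p q B : ℝ) (m : Fin d → Fin d → ℝ) : Prop := ∀ y w : Matrix (Fin d) (Fin d) ℂ,
  ∑ i, ∑ l, m i l * (y i l * w l i).re ≤ B * (np p y / p + np q w / q)

noncomputable def entryL {d : ℕ} (i l : Fin d) : Matrix (Fin d) (Fin d) ℂ →ₗ[ℝ] ℂ where
  toFun A := A i l
  map_add' _ _ := rfl
  map_smul' _ _ := rfl

noncomputable def reL (c : ℂ) : ℂ →ₗ[ℝ] ℝ where
  toFun z := (c * z).re
  map_add' a b := by rw [mul_add, Complex.add_re]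
  map_smul' r a := by simp; ring

lemma mean_sum {ι : Type} (s : Finset ι) (K : ℕ) (f : ι → Om K → ℝ) : mean K (fun ω => ∑ i ∈ s, f i ω) = ∑ i ∈ s, mean K (f i) := by
  classical
  induction s using Finset.induction_on with
  | empty => simp only [Finset.sum_empty]; exact mean_const K 0
  | insert a s ha ih => simp only [Finset.sum_insert ha, mean_add, ih]

lemma good_SS {d : ℕ} {p q B : ℝ} (hpq : p.HolderConjugate q) (hB : 1 ≤ B)
    (hS : ∀ (K : ℕ) (v : ℕ → ℝ), (∀ i, |v i| ≤ 1) → Strong d K v p B) (K : ℕ) (v : ℕ → ℝ) (hv : ∀ i, |v i| ≤ 1)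
    (g : ℕ → Fin d → ℝ) : Good d p q B (fun i l => SS K v (fun k => g k i - g k l)) := by
  intro y w
  let u : Om K → Matrix (Fin d) (Fin d) ℂ := fun ω => diagonal (fun i => ph K (fun k => g k i) ω)
  have hu : ∀ ω, IsU (u ω) := by
    intro ω
    simp only [IsU, u, diagonal_conjTranspose, diagonal_mul_diagonal]
    rw [← diagonal_one]; congr 1; funext i
    simp only [Pi.star_apply, Complex.star_def]
    rw [Complex.conj_mul', ph_norm]; simp
  let Y : Om K → Matrix (Fin d) (Fin d) ℂ := fun ω => u ω * y * (u ω)ᴴ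
  let W : Om K → Matrix (Fin d) (Fin d) ℂ := fun ω => u ω * w * (u ω)ᴴ
  have hY : ∀ ω i l, Y ω i l = y i l * ph K (fun k => g k i - g k l) ω := by
    intro ω i l
    simp only [Y, u, diagonal_conjTranspose, mul_diagonal, diagonal_mul, Pi.star_apply]
    rw [ph_sub K (fun k => g k i) (fun k => g k l)]; ring
  have hW : ∀ ω i l, W ω l i = w l i * star (ph K (fun k => g k i - g k l) ω) := by
    intro ω i l
    simp only [W, u, diagonal_conjTranspose, mul_diagonal, diagonal_mul, Pi.star_apply]
    rw [ph_sub K (fun k => g k i) (fun k => g k l), star_mul', star_star]; ring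
  have hTY : ∀ ω i l, TT K v Y ω i l = y i l * TT K v (ph K (fun k => g k i - g k l)) ω := by
    intro ω i l
    have := TT_map (entryL i l) K v Y ω
    rw [show TT K v Y ω i l = entryL i l (TT K v Y ω) from rfl, ← this, ← TT_cmul]
    congr 1; funext ω; exact hY ω i l
  have h1 : mean K (fun ω => tr (TT K v Y ω * W ω)) = ∑ i, ∑ l, SS K v (fun k => g k i - g k l) * (y i l * w l i).re := by
    have : ∀ ω, tr (TT K v Y ω * W ω) = ∑ i, ∑ l, reL (y i l * w l i) (TT K v (ph K (fun k => g k i - g k l)) ω * star (ph K (fun k => g k i - g k l) ω)) := by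
      intro ω
      simp only [tr, trace, diag_apply, Matrix.mul_apply, Complex.re_sum, hTY, hW]
      refine Finset.sum_congr rfl fun i _ => Finset.sum_congr rfl fun l _ => ?_
      show _ = (_ : ℂ).re
      congr 1; ring
    simp only [this, mean_sum, mean_map, mean_SS]
    refine Finset.sum_congr rfl fun i _ => Finset.sum_congr rfl fun l _ => ?_
    show ((_ : ℂ) * _).re = _
    rw [Complex.re_mul_ofReal, mul_comm]
  rw [← h1]
  have h2 := mean_mono K (fun ω => young_mat (TT K v Y ω) (W ω) hpq)
  refine h2.trans ?_
  have e1 : ∀ ω, np p (TT K v Y ω) / p + np q (W ω) / q = (1 / p) * np p (TT K v Y ω) + np q w / q := by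
    intro ω
    rw [np_unitary (hu ω) (hu ω).ct]; ring
  simp only [e1]
  rw [mean_add, mean_mul, mean_const]
  have h3 := hS K v hv Y
  have e2 : ∀ ω, np p (Y ω) = np p y := fun ω => np_unitary (hu ω) (hu ω).ct p
  simp only [e2, mean_const] at h3
  have hp := hpq.pos
  have hq := hpq.symm.pos
  have h4 : 0 ≤ np q w / q := div_nonneg (np_nonneg _ _) hq.le
  calc _ ≤ (1 / p) * (B * np p y) + np q w / q := by
        have := mul_le_mul_of_nonneg_left h3 (show 0 ≤ 1 / p by positivity); linarith
    _ ≤ (1 / p) * (B * np p y) + B * (np q w / q) := by nlinarith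
    _ = _ := by ring

abbrev Pr (d : ℕ) := (Fin d → Fin d → ℝ) × (Fin d → Fin d → ℝ)

def Reach (d : ℕ) : Set (Pr d) := {x | ∃ (K : ℕ) (v : ℕ → ℝ) (g : ℕ → Fin d → ℝ), (∀ i, |v i| ≤ 1) ∧
  x = (fun i l => SS K v (fun k => g k i - g k l), fun i l => RR K (fun k => g k i - g k l))}

def HH (d : ℕ) : Set (Pr d) := closedConvexHull ℝ (Reach d)

noncomputable def LL {d : ℕ} (n x : Pr d) : Pr d := (x.1 + n.1 * x.2, (1 - n.2) * x.2)

noncomputable def gen {d : ℕ} (v : ℝ) (g : Fin d → ℝ) : Pr d :=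
  (fun i l => v * Real.sin (g i - g l) ^ 2, fun i l => Real.sin (g i - g l) ^ 2)

lemma LL_gen {d : ℕ} {v : ℝ} (hv : |v| ≤ 1) (g : Fin d → ℝ) {x : Pr d} (hx : x ∈ HH d) : LL (gen v g) x ∈ HH d := by
  have h : HH d ⊆ {x | LL (gen v g) x ∈ HH d} := by
    apply closedConvexHull_min
    · rintro x ⟨K, v', g', hv', rfl⟩
      apply subset_closedConvexHull
      refine ⟨K + 1, fun k => Nat.casesOn k v v', fun k => Nat.casesOn k g g', ?_, ?_⟩
      · intro i; cases i
        · exact hv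
        · exact hv' _
      · refine Prod.ext ?_ ?_
        · funext i l
          change SS K v' (fun k => g' k i - g' k l) + v * Real.sin (g i - g l) ^ 2 * RR K (fun k => g' k i - g' k l) =
            v * Real.sin (g i - g l) ^ 2 * RR K (fun k => g' k i - g' k l) + SS K v' (fun k => g' k i - g' k l)
          ring
        · funext i l
          change (1 - Real.sin (g i - g l) ^ 2) * RR K (fun k => g' k i - g' k l) =
            Real.cos (g i - g l) ^ 2 * RR K (fun k => g' k i - g' k l)
          rw [Real.cos_sq']
    · intro x hx y hy a b ha hb hab
      have e : LL (gen v g) (a • x + b • y) = a • LL (gen v g) x + b • LL (gen v g) y := by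
        refine Prod.ext ?_ ?_ <;> funext i l <;> simp [LL] <;> ring
      show LL (gen v g) (a • x + b • y) ∈ HH d
      rw [e]
      exact convex_closedConvexHull hx hy ha hb hab
    · refine isClosed_closedConvexHull.preimage (f := LL (gen v g)) ?_
      unfold LL; fun_prop
  exact h hx

def KK {d : ℕ} {V : Type} (E : Fin d → V) : Set (Pr d) := {n | (∀ i l, |n.1 i l| ≤ n.2 i l) ∧
  (∀ i l, E i = E l → n.2 i l = 0) ∧ ∃ ε > 0, ∀ t : ℝ, 0 ≤ t → t ≤ ε → ∀ x ∈ HH d, LL (t • n) x ∈ HH d}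

lemma gen_mem {d : ℕ} {V : Type} {E : Fin d → V} {v : ℝ} (hv : |v| ≤ 1) {g : Fin d → ℝ}
    (hg : ∀ i l, E i = E l → g i = g l) : gen v g ∈ KK E := by
  refine ⟨?_, ?_, 1, one_pos, ?_⟩
  · intro i l
    simp only [gen]
    rw [abs_mul, abs_of_nonneg (sq_nonneg (Real.sin (g i - g l)))]
    exact mul_le_of_le_one_left (sq_nonneg _) hv
  · intro i l h
    simp [gen, hg i l h]
  · intro t ht ht1 x hx
    have e : LL (t • gen v g) x = (1 - t) • x + t • LL (gen v g) x := by
      refine Prod.ext ?_ ?_ <;> funext i l <;> simp [LL] <;> ring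
    rw [e]
    exact convex_closedConvexHull hx (LL_gen hv g hx) (by linarith) ht (by ring)

lemma KK_smul {d : ℕ} {V : Type} {E : Fin d → V} {n : Pr d} (hn : n ∈ KK E) {c : ℝ} (hc : 0 ≤ c) : c • n ∈ KK E := by
  obtain ⟨h1, h2, ε, hε, h3⟩ := hn
  refine ⟨?_, ?_, ε / (c + 1), by positivity, ?_⟩
  · intro i l
    simp only [Prod.smul_fst, Prod.smul_snd, Pi.smul_apply, smul_eq_mul]
    rw [abs_mul, abs_of_nonneg hc]
    exact mul_le_mul_of_nonneg_left (h1 i l) hc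
  · intro i l h
    simp [h2 i l h]
  · intro t ht ht1 x hx
    rw [smul_smul]
    refine h3 _ (by positivity) ?_ x hx
    rw [le_div_iff₀ (by positivity)] at ht1
    nlinarith

lemma KK_add {d : ℕ} {V : Type} {E : Fin d → V} {n m : Pr d} (hn : n ∈ KK E) (hm : m ∈ KK E) : n + m ∈ KK E := by
  obtain ⟨h1, h2, ε, hε, h3⟩ := hn
  obtain ⟨k1, k2, δ, hδ, k3⟩ := hm
  refine ⟨?_, ?_, min ε δ / 2, by positivity, ?_⟩
  · intro i l
    exact (abs_add_le _ _).trans (add_le_add (h1 i l) (k1 i l))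
  · intro i l h
    simp [h2 i l h, k2 i l h]
  · intro t ht ht1 x hx
    have e : LL (t • (n + m)) x = (1 / 2 : ℝ) • LL ((2 * t) • n) x + (1 / 2 : ℝ) • LL ((2 * t) • m) x := by
      refine Prod.ext ?_ ?_ <;> funext i l <;> simp [LL] <;> ring
    rw [e]
    refine convex_closedConvexHull (h3 _ (by positivity) ?_ x hx) (k3 _ (by positivity) ?_ x hx) (by norm_num) (by norm_num) (by norm_num)
    · have := min_le_left ε δ; linarith
    · have := min_le_right ε δ; linarith

lemma KK_zero {d : ℕ} {V : Type} (E : Fin d → V) : (0 : Pr d) ∈ KK E := by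
  have := KK_smul (gen_mem (E := E) (v := 0) (by simp) (g := fun _ => 0) (by simp)) (le_refl (0 : ℝ))
  simpa using this

lemma good_lim {d : ℕ} {p q B : ℝ} {m : ℕ → Fin d → Fin d → ℝ} {m' : Fin d → Fin d → ℝ} (h : ∀ k, Good d p q B (m k))
    (ht : ∀ i l, Filter.Tendsto (fun k => m k i l) Filter.atTop (nhds (m' i l))) : Good d p q B m' := by
  intro y w
  have h1 : Filter.Tendsto (fun k => ∑ i, ∑ l, m k i l * (y i l * w l i).re) Filter.atTop (nhds (∑ i, ∑ l, m' i l * (y i l * w l i).re)) :=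
    tendsto_finsetSum _ fun i _ => tendsto_finsetSum _ fun l _ => (ht i l).mul_const _
  exact le_of_tendsto' h1 (fun k => h k y w)

lemma good_HH {d : ℕ} {p q B : ℝ} (hpq : p.HolderConjugate q) (hB : 1 ≤ B)
    (hS : ∀ (K : ℕ) (v : ℕ → ℝ), (∀ i, |v i| ≤ 1) → Strong d K v p B) {x : Pr d} (hx : x ∈ HH d) : Good d p q B x.1 := by
  have h : HH d ⊆ {x | Good d p q B x.1} := by
    apply closedConvexHull_min
    · rintro x ⟨K, v, g, hv, rfl⟩
      exact good_SS hpq hB hS K v hv g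
    · intro x hx z hz a b ha hb hab y w
      have h1 := mul_le_mul_of_nonneg_left (hx y w) ha
      have h2 := mul_le_mul_of_nonneg_left (hz y w) hb
      have e : ∑ i, ∑ l, (a • x + b • z).1 i l * (y i l * w l i).re =
          a * ∑ i, ∑ l, x.1 i l * (y i l * w l i).re + b * ∑ i, ∑ l, z.1 i l * (y i l * w l i).re := by
        simp only [Finset.mul_sum, ← Finset.sum_add_distrib]
        refine Finset.sum_congr rfl fun i _ => Finset.sum_congr rfl fun l _ => ?_
        simp; ring
      rw [e]
      refine (add_le_add h1 h2).trans (le_of_eq ?_)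
      rw [← add_mul, hab, one_mul]
    · simp only [Good, Set.ofPred_forall]
      refine isClosed_iInter fun y => isClosed_iInter fun w => isClosed_le ?_ continuous_const
      fun_prop
  exact h hx

lemma good_KK {d : ℕ} {V : Type} {E : Fin d → V} {p q B : ℝ} (hpq : p.HolderConjugate q) (hB : 1 ≤ B)
    (hS : ∀ (K : ℕ) (v : ℕ → ℝ), (∀ i, |v i| ≤ 1) → Strong d K v p B) {n : Pr d} (hn : n ∈ KK E) :
    Good d p q B (fun i l => n.1 i l / n.2 i l) := by
  obtain ⟨h1, h2, ε, hε, h3⟩ := hn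
  have hD0 : ∀ i l, 0 ≤ n.2 i l := fun i l => (abs_nonneg _).trans (h1 i l)
  set M := ∑ i, ∑ l, n.2 i l with hM
  have hM0 : 0 ≤ M := Finset.sum_nonneg fun i _ => Finset.sum_nonneg fun l _ => hD0 i l
  have hDM : ∀ i l, n.2 i l ≤ M := fun i l =>
    (Finset.single_le_sum (fun l _ => hD0 i l) (Finset.mem_univ l)).trans
      (Finset.single_le_sum (f := fun i => ∑ l, n.2 i l) (fun i _ => Finset.sum_nonneg fun l _ => hD0 i l) (Finset.mem_univ i))
  obtain ⟨t, ht0, htε, htM⟩ : ∃ t : ℝ, 0 < t ∧ t ≤ ε ∧ t * M ≤ 1 := by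
    refine ⟨min ε (1 / (M + 1)), by positivity, min_le_left _ _, ?_⟩
    calc _ ≤ 1 / (M + 1) * M := mul_le_mul_of_nonneg_right (min_le_right _ _) hM0
      _ ≤ 1 := by rw [one_div, inv_mul_eq_div, div_le_one (by positivity)]; linarith
  have hL := h3 t ht0.le htε
  let X : ℕ → Pr d := fun k => (fun i l => t * n.1 i l * ∑ j ∈ Finset.range k, (1 - t * n.2 i l) ^ j, fun i l => (1 - t * n.2 i l) ^ k)
  have hX : ∀ k, X k ∈ HH d := by
    intro k
    induction k with
    | zero =>
      apply subset_closedConvexHull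
      refine ⟨0, fun _ => 0, fun _ _ => 0, by simp, ?_⟩
      simp [X, SS, RR]
    | succ k ih =>
      have := hL _ ih
      convert this using 1
      refine Prod.ext ?_ ?_ <;> funext i l <;> simp [LL, X, Finset.sum_range_succ, pow_succ] <;> ring
  refine good_lim (fun k => good_HH hpq hB hS (hX k)) ?_
  intro i l
  simp only [X]
  rcases (hD0 i l).eq_or_lt with h0 | h0
  · have : n.1 i l = 0 := by have := h1 i l; rw [← h0] at this; simpa using this
    simp [this]
  · have htD : 0 < t * n.2 i l := by positivity
    have htD1 : t * n.2 i l ≤ 1 := (mul_le_mul_of_nonneg_left (hDM i l) ht0.le).trans htM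
    have := (hasSum_geometric_of_abs_lt_one (r := 1 - t * n.2 i l) (by rw [abs_lt]; constructor <;> linarith)).tendsto_sum_nat
    have h5 := this.const_mul (t * n.1 i l)
    convert h5 using 2
    rw [sub_sub_cancel]; field_simp

lemma good_closure {d : ℕ} {V : Type} {E : Fin d → V} {p q B : ℝ} (hpq : p.HolderConjugate q) (hB : 1 ≤ B)
    (hS : ∀ (K : ℕ) (v : ℕ → ℝ), (∀ i, |v i| ≤ 1) → Strong d K v p B) {n : Pr d} (hn : n ∈ closure (KK E))
    (hne : ∀ i l, E i ≠ E l → n.2 i l ≠ 0) :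
    Good d p q B (fun i l => n.1 i l / n.2 i l) := by
  obtain ⟨x, hx, hlim⟩ := mem_closure_iff_seq_limit.mp hn
  refine good_lim (fun k => good_KK hpq hB hS (hx k)) ?_
  intro i l
  have l1 : Filter.Tendsto (fun k => (x k).1 i l) Filter.atTop (nhds (n.1 i l)) :=
    ((by fun_prop : Continuous fun y : Pr d => y.1 i l).tendsto n).comp hlim
  have l2 : Filter.Tendsto (fun k => (x k).2 i l) Filter.atTop (nhds (n.2 i l)) :=
    ((by fun_prop : Continuous fun y : Pr d => y.2 i l).tendsto n).comp hlim
  by_cases h : E i = E l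
  · have e1 : ∀ k, (x k).2 i l = 0 := fun k => (hx k).2.1 i l h
    have e2 : n.2 i l = 0 := by
      simp only [e1] at l2
      exact (tendsto_nhds_unique l2 tendsto_const_nhds)
    simp [e1, e2]
  · exact l1.div l2 (hne i l h)

lemma cone_int {F α : Type} [NormedAddCommGroup F] [NormedSpace ℝ F] [CompleteSpace F] [MeasurableSpace α]
    (μ : MeasureTheory.Measure α) {S : Set F} (hS : IsClosed S) (h0 : (0 : F) ∈ S) (hadd : ∀ x ∈ S, ∀ y ∈ S, x + y ∈ S)
    (hsm : ∀ x ∈ S, ∀ c : ℝ, 0 ≤ c → c • x ∈ S) {f : α → F} (hf : ∀ᵐ a ∂μ, f a ∈ S) : ∫ a, f a ∂μ ∈ S := by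
  by_cases hi : MeasureTheory.Integrable f μ
  swap
  · rw [MeasureTheory.integral_undef hi]; exact h0
  by_contra hn
  have hconv : Convex ℝ S := fun x hx y hy a b ha hb _ => hadd _ (hsm x hx a ha) _ (hsm y hy b hb)
  obtain ⟨φ, u, h1, h2⟩ := geometric_hahn_banach_closed_point hconv hS hn
  have hu : 0 < u := by simpa using h1 0 h0
  have h3 : ∀ x ∈ S, φ x ≤ 0 := by
    intro x hx
    by_contra hpos
    push Not at hpos
    have := h1 _ (hsm x hx (u / φ x) (by positivity))
    rw [map_smul, smul_eq_mul, div_mul_cancel₀ _ hpos.ne'] at this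
    exact lt_irrefl _ this
  have h4 : φ (∫ a, f a ∂μ) ≤ 0 := by
    rw [← φ.integral_comp_comm hi]
    exact MeasureTheory.integral_nonpos_of_ae (hf.mono fun a ha => h3 _ ha)
  linarith

lemma closure_int {d : ℕ} {V : Type} {E : Fin d → V} {α : Type} [MeasurableSpace α]
    (μ : MeasureTheory.Measure α) {f : α → Pr d} (hf : ∀ᵐ a ∂μ, f a ∈ closure (KK E)) : ∫ a, f a ∂μ ∈ closure (KK E) := by
  refine cone_int μ isClosed_closure (subset_closure (KK_zero E)) ?_ ?_ hf
  · intro x hx y hy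
    exact map_mem_closure₂ continuous_add hx hy fun a ha b hb => KK_add ha hb
  · intro x hx c hc
    exact map_mem_closure (continuous_const_smul c) hx fun a ha => KK_smul ha hc

section fourier
set_option linter.unusedSectionVars false
open MeasureTheory FourierTransform
open scoped RealInnerProductSpace SchwartzMap

variable {V : Type} [NormedAddCommGroup V] [InnerProductSpace ℝ V] [FiniteDimensional ℝ V] [MeasurableSpace V] [BorelSpace V]

noncomputable def kap (z : V) : ℝ := ((1 + ‖z‖) ^ (Module.finrank ℝ V + 3))⁻¹

lemma kap_pos (z : V) : 0 < kap z := by unfold kap; positivity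

lemma kap_cont : Continuous (kap : V → ℝ) := by
  unfold kap
  refine Continuous.inv₀ (by fun_prop) (fun z => by positivity)


lemma kap_isom (R : V ≃ₗᵢ[ℝ] V) (z : V) : kap (R z) = kap z := by simp [kap]

lemma pow_int (k : ℕ) (hk : Module.finrank ℝ V < k) : Integrable (fun z : V => ((1 + ‖z‖) ^ k)⁻¹) := by
  have := integrable_one_add_norm (E := V) (μ := volume) (r := k) (by exact_mod_cast hk)
  refine this.congr (Filter.Eventually.of_forall fun z => ?_)
  simp only
  rw [Real.rpow_neg (by positivity), Real.rpow_natCast]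

lemma kap_int : Integrable (kap : V → ℝ) := pow_int _ (by omega)

lemma kap_int2 : Integrable (fun z : V => kap z * ‖z‖ ^ 2) := by
  refine (pow_int (Module.finrank ℝ V + 1) (by omega)).mono' (kap_cont.mul (by fun_prop)).aestronglyMeasurable
    (Filter.Eventually.of_forall fun z => ?_)
  rw [Real.norm_of_nonneg (mul_nonneg (kap_pos z).le (by positivity)), kap, inv_mul_le_iff₀ (by positivity)]
  rw [show Module.finrank ℝ V + 3 = 2 + (Module.finrank ℝ V + 1) from by ring, pow_add, mul_assoc, mul_inv_cancel₀ (by positivity), mul_one]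
  have := norm_nonneg z
  gcongr; linarith

lemma four_rep (g : V → ℝ) (hg : ContDiff ℝ (⊤ : ℕ∞) g) (hc : HasCompactSupport g) (he : ∀ a, g (-a) = g a) (h0 : g 0 = 0) :
    ∃ (u : V → ℝ) (C : ℝ), 0 < C ∧ Continuous u ∧ (∀ z, |u z| ≤ C * kap z) ∧
      ∀ a, g a = ∫ z, u z * Real.sin (Real.pi * ⟪a, z⟫) ^ 2 := by
  let G : 𝓢(V, ℂ) := HasCompactSupport.toSchwartzMap (f := fun a => (g a : ℂ)) (hc.comp_left (g := fun x : ℝ => (x : ℂ)) (by simp))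
    (Complex.ofRealCLM.contDiff.comp hg)
  have hG : ∀ a, G a = (g a : ℂ) := fun a => rfl
  let H : 𝓢(V, ℂ) := 𝓕 G
  have hinv : ∀ a, G a = ∫ z, Complex.exp ((2 * Real.pi * ⟪z, a⟫ : ℝ) * Complex.I) * H z := by
    intro a
    have : 𝓕⁻ H = G := FourierTransform.fourierInv_fourier_eq G
    rw [← this, SchwartzMap.fourierInv_coe, Real.fourierInv_eq']
    simp
  have hHi : Integrable (H : V → ℂ) := H.integrable
  have hint : ∀ a, Integrable (fun z => Complex.exp ((2 * Real.pi * ⟪z, a⟫ : ℝ) * Complex.I) * H z) := by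
    intro a
    refine hHi.norm.mono' ((by fun_prop : Continuous _).mul H.continuous).aestronglyMeasurable (Filter.Eventually.of_forall fun z => ?_)
    rw [norm_mul, Complex.norm_exp_ofReal_mul_I, one_mul]
  obtain ⟨C, hC⟩ : ∃ C, ∀ z, (1 + ‖z‖) ^ (Module.finrank ℝ V + 3) * ‖H z‖ ≤ C := by
    refine ⟨2 ^ (Module.finrank ℝ V + 3) * (Finset.Iic (Module.finrank ℝ V + 3, 0)).sup (fun m => SchwartzMap.seminorm ℝ m.1 m.2) H, fun z => ?_⟩
    have := SchwartzMap.one_add_le_sup_seminorm_apply (𝕜 := ℝ) (m := (Module.finrank ℝ V + 3, 0)) le_rfl le_rfl H z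
    rw [norm_iteratedFDeriv_zero] at this
    exact this
  have hC0 : 0 ≤ C := le_trans (by positivity) (hC 0)
  refine ⟨fun z => -2 * (H z).re, 2 * C + 1, by positivity, ?_, ?_, ?_⟩
  · have := H.continuous
    fun_prop
  · intro z
    have h1 : ‖H z‖ ≤ C * kap z := by
      rw [kap, ← div_eq_mul_inv, le_div_iff₀ (by positivity), mul_comm]; exact hC z
    have h2 := Complex.abs_re_le_norm (H z)
    have := kap_pos z
    rw [abs_mul]; norm_num
    nlinarith
  · intro a
    have e1 : ((g a : ℝ) : ℂ) = (G a + G (-a)) / 2 - G 0 := by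
      rw [hG, hG, hG, he, h0]; push_cast; ring
    have hi2 : Integrable (fun z => (Complex.exp ((2 * Real.pi * ⟪z, a⟫ : ℝ) * Complex.I) * H z +
        Complex.exp ((2 * Real.pi * ⟪z, -a⟫ : ℝ) * Complex.I) * H z) / 2) := ((hint _).add (hint _)).div_const _
    have e2 : ((g a : ℝ) : ℂ) = ∫ z, ((-2 * Real.sin (Real.pi * ⟪a, z⟫) ^ 2 : ℝ) : ℂ) * H z := by
      rw [e1, hinv a, hinv (-a), hinv 0, ← integral_add (hint _) (hint _), ← integral_div, ← integral_sub (hi2) (hint _)]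
      congr 1; funext z
      simp only [inner_neg_right, inner_zero_right, Pi.add_apply]
      have : Real.sin (Real.pi * ⟪a, z⟫) ^ 2 = 1 / 2 - Real.cos (2 * Real.pi * ⟪z, a⟫) / 2 := by
        rw [Real.sin_sq_eq_half_sub, real_inner_comm]; ring_nf
      rw [this]
      push_cast
      rw [Complex.cos]
      ring_nf
      simp
      ring
    have e3 := congrArg Complex.re e2
    rw [Complex.ofReal_re] at e3
    rw [e3, ← Complex.reCLM_apply, ← ContinuousLinearMap.integral_comp_comm]
    · congr 1; funext z
      rw [Complex.reCLM_apply, Complex.re_ofReal_mul]; ring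
    · refine (hHi.const_mul 2).norm.mono' ((by fun_prop : Continuous _).mul H.continuous).aestronglyMeasurable (Filter.Eventually.of_forall fun z => ?_)
      rw [norm_mul, norm_mul]
      refine mul_le_mul_of_nonneg_right ?_ (norm_nonneg _)
      rw [Complex.norm_real, Real.norm_eq_abs, abs_mul, abs_of_nonneg (sq_nonneg (Real.sin _))]
      norm_num
      exact Real.abs_sin_le_one _

end fourier

section dd
set_option linter.unusedSectionVars false
open MeasureTheory
open scoped RealInnerProductSpace

variable {V : Type} [NormedAddCommGroup V] [InnerProductSpace ℝ V] [FiniteDimensional ℝ V] [MeasurableSpace V] [BorelSpace V]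

noncomputable def D1 (a : V) : ℝ := ∫ z, kap z * Real.sin (Real.pi * ⟪a, z⟫) ^ 2

lemma D1_int (a : V) : Integrable (fun z => kap z * Real.sin (Real.pi * ⟪a, z⟫) ^ 2) := by
  refine kap_int.mono' (kap_cont.mul (by fun_prop)).aestronglyMeasurable (Filter.Eventually.of_forall fun z => ?_)
  rw [Real.norm_of_nonneg (mul_nonneg (kap_pos z).le (sq_nonneg _))]
  exact mul_le_of_le_one_right (kap_pos z).le (Real.sin_sq_le_one _)

lemma D1_nonneg (a : V) : 0 ≤ D1 a := integral_nonneg fun z => mul_nonneg (kap_pos z).le (sq_nonneg _)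

lemma D1_le (a : V) : D1 a ≤ ∫ z : V, kap z :=
  integral_mono (D1_int a) kap_int fun z => mul_le_of_le_one_right (kap_pos z).le (Real.sin_sq_le_one _)

lemma D1_le2 (a : V) : D1 a ≤ Real.pi ^ 2 * ‖a‖ ^ 2 * ∫ z : V, kap z * ‖z‖ ^ 2 := by
  rw [← integral_const_mul]
  refine integral_mono (D1_int a) (kap_int2.const_mul _) fun z => ?_
  have h1 : Real.sin (Real.pi * ⟪a, z⟫) ^ 2 ≤ (Real.pi * (‖a‖ * ‖z‖)) ^ 2 := by
    rw [sq_le_sq]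
    refine Real.abs_sin_le_abs.trans ?_
    rw [abs_mul, abs_mul, abs_of_pos Real.pi_pos, abs_of_nonneg (by positivity : 0 ≤ ‖a‖ * ‖z‖)]
    exact mul_le_mul_of_nonneg_left (abs_real_inner_le_norm a z) Real.pi_pos.le
  calc _ ≤ kap z * (Real.pi * (‖a‖ * ‖z‖)) ^ 2 := mul_le_mul_of_nonneg_left h1 (kap_pos z).le
    _ = _ := by ring

lemma D1_cont : Continuous (D1 : V → ℝ) := by
  refine continuous_of_dominated (bound := kap) ?_ ?_ kap_int ?_
  · intro a; exact (D1_int a).aestronglyMeasurable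
  · intro a
    refine Filter.Eventually.of_forall fun z => ?_
    rw [Real.norm_of_nonneg (mul_nonneg (kap_pos z).le (sq_nonneg _))]
    exact mul_le_of_le_one_right (kap_pos z).le (Real.sin_sq_le_one _)
  · refine Filter.Eventually.of_forall fun z => ?_
    fun_prop

lemma D1_rot {a b : V} (h : ‖a‖ = ‖b‖) : D1 a = D1 b := by
  let R : V ≃ₗᵢ[ℝ] V := (Submodule.span ℝ {a - b})ᗮ.reflection
  have hR : R a = b := Submodule.reflection_sub h
  unfold D1
  rw [← (R.measurePreserving).integral_comp (R.toHomeomorph.measurableEmbedding) (fun z => kap z * Real.sin (Real.pi * ⟪b, z⟫) ^ 2)]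
  congr 1; funext z
  rw [kap_isom, ← hR, R.inner_map_map]

lemma D1_pos {a : V} (ha : a ≠ 0) : 0 < D1 a := by
  unfold D1
  rw [integral_pos_iff_support_of_nonneg (fun z => mul_nonneg (kap_pos z).le (sq_nonneg _)) (D1_int a)]
  have hc : Continuous (fun z : V => kap z * Real.sin (Real.pi * ⟪a, z⟫) ^ 2) := kap_cont.mul (by fun_prop)
  refine hc.isOpen_support.measure_pos _ ⟨(1 / (2 * ‖a‖ ^ 2)) • a, ?_⟩
  rw [Function.mem_support, inner_smul_right, real_inner_self_eq_norm_sq]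
  have h2 : ‖a‖ ≠ 0 := norm_ne_zero_iff.mpr ha
  have : Real.pi * (1 / (2 * ‖a‖ ^ 2) * ‖a‖ ^ 2) = Real.pi / 2 := by field_simp
  rw [this, Real.sin_pi_div_two]
  have := (kap_pos ((1 / (2 * ‖a‖ ^ 2)) • a)).ne'
  simpa using this

lemma DD_int (a : V) : IntegrableOn (fun r : ℝ => (r ^ 2)⁻¹ * D1 (r • a)) (Set.Ioi 0) := by
  have hm : ∀ s : Set ℝ, AEStronglyMeasurable (fun r : ℝ => (r ^ 2)⁻¹ * D1 (r • a)) (volume.restrict s) := by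
    intro s
    have : Continuous fun r : ℝ => D1 (r • a) := D1_cont.comp (by fun_prop)
    exact ((measurable_id.pow_const 2).inv.mul this.measurable).aestronglyMeasurable
  rw [← Set.Ioc_union_Ioi_eq_Ioi (zero_le_one : (0 : ℝ) ≤ 1)]
  refine IntegrableOn.union ?_ ?_
  · refine Measure.integrableOn_of_bounded (M := Real.pi ^ 2 * ‖a‖ ^ 2 * ∫ z : V, kap z * ‖z‖ ^ 2) (by simp) (by simpa using hm Set.univ) ?_
    refine (ae_restrict_iff' measurableSet_Ioc).mpr (Filter.Eventually.of_forall fun r hr => ?_)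
    have hr0 : 0 < r := hr.1
    rw [Real.norm_of_nonneg (mul_nonneg (by positivity) (D1_nonneg _)), inv_mul_le_iff₀ (by positivity)]
    refine (D1_le2 _).trans (le_of_eq ?_)
    rw [norm_smul, Real.norm_of_nonneg hr0.le]; ring
  · have h1 : IntegrableOn (fun r : ℝ => r ^ (-2 : ℝ)) (Set.Ioi 1) := integrableOn_Ioi_rpow_of_lt (by norm_num) one_pos
    refine (h1.mul_const (∫ z : V, kap z)).mono' (hm _) ?_
    refine (ae_restrict_iff' measurableSet_Ioi).mpr (Filter.Eventually.of_forall fun r hr => ?_)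
    have hr0 : 0 < r := lt_trans one_pos hr
    rw [Real.norm_of_nonneg (mul_nonneg (by positivity) (D1_nonneg _)), Real.rpow_neg hr0.le]
    norm_num
    exact mul_le_mul_of_nonneg_left (D1_le _) (by positivity)

lemma DD_eq [Nontrivial V] : ∃ c : ℝ, 0 < c ∧ ∀ a : V, ∫ r in Set.Ioi (0 : ℝ), (r ^ 2)⁻¹ * D1 (r • a) = c * ‖a‖ := by
  obtain ⟨e, he⟩ := exists_norm_eq V (zero_le_one (α := ℝ))
  refine ⟨∫ r in Set.Ioi (0 : ℝ), (r ^ 2)⁻¹ * D1 (r • e), ?_, ?_⟩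
  · rw [setIntegral_pos_iff_support_of_nonneg_ae]
    · have : (Function.support fun r : ℝ => (r ^ 2)⁻¹ * D1 (r • e)) ∩ Set.Ioi 0 = Set.Ioi 0 := by
        rw [Set.inter_eq_right]
        intro r hr
        have hr0 : (0 : ℝ) < r := hr
        have : r • e ≠ 0 := smul_ne_zero hr0.ne' (by intro h; simp [h] at he)
        exact (mul_pos (by positivity) (D1_pos this)).ne'
      rw [this]; simp
    · exact Filter.Eventually.of_forall fun r => mul_nonneg (by positivity) (D1_nonneg _)
    · exact DD_int e
  · intro a
    rcases eq_or_ne a 0 with rfl | ha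
    · simp [D1]
    have hb : 0 < ‖a‖ := norm_pos_iff.mpr ha
    have h1 := integral_comp_mul_right_Ioi (fun r : ℝ => (r ^ 2)⁻¹ * D1 (r • e)) 0 hb
    rw [zero_mul, smul_eq_mul] at h1
    have h2 : ∀ r : ℝ, (r ^ 2)⁻¹ * D1 (r • a) = ‖a‖ ^ 2 * (((r * ‖a‖) ^ 2)⁻¹ * D1 ((r * ‖a‖) • e)) := by
      intro r
      rw [D1_rot (a := r • a) (b := (r * ‖a‖) • e) (by simp [norm_smul, he])]
      rw [mul_pow]; field_simp
    simp only [h2]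
    rw [integral_const_mul, h1]; field_simp

end dd

section rep
set_option linter.unusedSectionVars false
open MeasureTheory
open scoped RealInnerProductSpace

variable {V : Type} [NormedAddCommGroup V] [InnerProductSpace ℝ V] [FiniteDimensional ℝ V] [MeasurableSpace V] [BorelSpace V]

lemma pr_integral {α : Type} [MeasurableSpace α] (μ : Measure α) {d : ℕ} (F1 F2 : α → Fin d → Fin d → ℝ)
    (h1 : ∀ i l, Integrable (fun a => F1 a i l) μ) (h2 : ∀ i l, Integrable (fun a => F2 a i l) μ) :
    ∫ a, ((F1 a, F2 a) : Pr d) ∂μ = ((fun i l => ∫ a, F1 a i l ∂μ, fun i l => ∫ a, F2 a i l ∂μ) : Pr d) := by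
  have i1 : Integrable F1 μ := Integrable.of_eval fun i => Integrable.of_eval fun l => h1 i l
  have i2 : Integrable F2 μ := Integrable.of_eval fun i => Integrable.of_eval fun l => h2 i l
  rw [integral_pair i1 i2]
  refine Prod.ext ?_ ?_
  · funext i l
    simp only
    rw [eval_integral (fun i => i1.eval i) i, eval_integral (fun l => h1 i l) l]
  · funext i l
    simp only
    rw [eval_integral (fun i => i2.eval i) i, eval_integral (fun l => h2 i l) l]

lemma rep_good [Nontrivial V] (g : V → ℝ) (hg : ContDiff ℝ (⊤ : ℕ∞) g) (hc : HasCompactSupport g) (he : ∀ a, g (-a) = g a) (h0 : g 0 = 0) :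
    ∃ C : ℝ, 0 < C ∧ ∀ (d : ℕ) (A : Fin d → V) (p q B : ℝ), p.HolderConjugate q → 1 ≤ B →
    (∀ (K : ℕ) (v : ℕ → ℝ), (∀ i, |v i| ≤ 1) → Strong d K v p B) →
    Good d p q B (fun i l => (∫ r in Set.Ioi (0 : ℝ), (r ^ 2)⁻¹ * g (r • (A i - A l))) / (C * ‖A i - A l‖)) := by
  obtain ⟨u, Cu, hCu, huc, hu, hrep⟩ := four_rep g hg hc he h0
  obtain ⟨c, hc0, hD⟩ := DD_eq (V := V)
  refine ⟨Cu * c, by positivity, ?_⟩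
  intro d A p q B hpq hB hS
  have hui : ∀ a, Integrable (fun z => u z * Real.sin (Real.pi * ⟪a, z⟫) ^ 2) := by
    intro a
    refine ((D1_int a).const_mul Cu).mono' (huc.mul (by fun_prop)).aestronglyMeasurable (Filter.Eventually.of_forall fun z => ?_)
    rw [Real.norm_eq_abs, abs_mul, abs_of_nonneg (sq_nonneg (Real.sin _)), ← mul_assoc]
    exact mul_le_mul_of_nonneg_right (hu z) (sq_nonneg _)
  have hgD : ∀ a, |g a| ≤ Cu * D1 a := by
    intro a
    rw [hrep a, D1, ← integral_const_mul, ← Real.norm_eq_abs]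
    refine norm_integral_le_of_norm_le ((D1_int a).const_mul Cu) (Filter.Eventually.of_forall fun z => ?_)
    rw [Real.norm_eq_abs, abs_mul, abs_of_nonneg (sq_nonneg (Real.sin _)), ← mul_assoc]
    exact mul_le_mul_of_nonneg_right (hu z) (sq_nonneg _)
  -- inner
  have hin : ∀ r : ℝ, ((fun i l => Cu⁻¹ * g (r • (A i - A l)), fun i l => D1 (r • (A i - A l))) : Pr d) ∈ closure (KK A) := by
    intro r
    have h1 := closure_int (E := A) (volume : Measure V) (f := fun z => kap z • gen (u z / (Cu * kap z)) (fun i => Real.pi * ⟪r • A i, z⟫))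
      (Filter.Eventually.of_forall fun z => subset_closure (KK_smul (gen_mem ?_ ?_) (kap_pos z).le))
    · convert h1 using 1
      have e : (fun z => kap z • gen (u z / (Cu * kap z)) (fun i => Real.pi * ⟪r • A i, z⟫)) = fun z =>
          ((fun i l => Cu⁻¹ * (u z * Real.sin (Real.pi * ⟪r • (A i - A l), z⟫) ^ 2),
            fun i l => kap z * Real.sin (Real.pi * ⟪r • (A i - A l), z⟫) ^ 2) : Pr d) := by
        funext z
        have hk := (kap_pos z).ne'
        have hs : ∀ i l, Real.pi * ⟪r • A i, z⟫ - Real.pi * ⟪r • A l, z⟫ = Real.pi * ⟪r • (A i - A l), z⟫ := by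
          intro i l; rw [smul_sub, inner_sub_left]; ring
        refine Prod.ext ?_ ?_
        · funext i l
          simp only [gen, hs, Prod.smul_fst, Pi.smul_apply, smul_eq_mul]
          field_simp
        · funext i l
          simp only [gen, hs, Prod.smul_snd, Pi.smul_apply, smul_eq_mul]
      rw [e, pr_integral _ _ _ (fun i l => (hui _).const_mul _) (fun i l => D1_int _)]
      refine Prod.ext ?_ rfl
      funext i l
      simp only
      rw [integral_const_mul, ← hrep]
    · have := kap_pos z
      rw [abs_div, abs_of_pos (by positivity : 0 < Cu * kap z), div_le_one (by positivity)]
      exact hu z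
    · intro i l h; simp [h]
  have hout := closure_int (E := A) (volume.restrict (Set.Ioi (0 : ℝ)))
    (f := fun r => ((fun i l => Cu⁻¹ * ((r ^ 2)⁻¹ * g (r • (A i - A l))), fun i l => (r ^ 2)⁻¹ * D1 (r • (A i - A l))) : Pr d))
    (Filter.Eventually.of_forall fun r => by
      have := map_mem_closure (continuous_const_smul ((r ^ 2)⁻¹)) (hin r) fun a ha => KK_smul ha (by positivity : 0 ≤ (r ^ 2)⁻¹)
      convert this using 1
      refine Prod.ext ?_ ?_
      · funext i l
        simp only [Prod.smul_fst, Pi.smul_apply, smul_eq_mul]; ring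
      · funext i l
        simp only [Prod.smul_snd, Pi.smul_apply, smul_eq_mul])
  have hgi : ∀ a : V, Integrable (fun r : ℝ => (r ^ 2)⁻¹ * g (r • a)) (volume.restrict (Set.Ioi 0)) := by
    intro a
    refine ((DD_int a).const_mul Cu).mono' ?_ (Filter.Eventually.of_forall fun r => ?_)
    · have : Continuous fun r : ℝ => g (r • a) := hg.continuous.comp (by fun_prop)
      exact ((measurable_id.pow_const 2).inv.mul this.measurable).aestronglyMeasurable
    · rw [Real.norm_eq_abs, abs_mul, abs_of_nonneg (by positivity)]
      calc _ ≤ (r ^ 2)⁻¹ * (Cu * D1 (r • a)) := mul_le_mul_of_nonneg_left (hgD _) (by positivity)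
        _ = _ := by ring
  rw [pr_integral _ _ _ (fun i l => (hgi _).const_mul _) (fun i l => DD_int _)] at hout
  have hG := good_closure hpq hB hS hout ?_
  · convert hG using 3 with i l
    simp only
    rw [hD, integral_const_mul]
    field_simp
  · intro i l h
    simp only
    rw [hD]
    exact (mul_pos hc0 (norm_pos_iff.mpr (sub_ne_zero.mpr h))).ne'

end rep

section bump
open MeasureTheory

abbrev VV (n : ℕ) := EuclideanSpace ℝ (Option (Fin n))

noncomputable def xs {n : ℕ} (a : VV n) : ℝ := ∑ i : Fin n, a (some i) ^ 2

noncomputable def bb (s : ℝ) : ℝ := Real.smoothTransition (s - 1) * Real.smoothTransition (4 - s)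

noncomputable def gg {n : ℕ} (j : Fin n) (a : VV n) : ℝ :=
  bb (xs a) * Real.smoothTransition (5 - a none ^ 2) * (a none * a (some j)) *
    Real.sqrt (xs a + a none ^ 2 + Real.smoothTransition (1 - xs a))

lemma xs_nonneg {n : ℕ} (a : VV n) : 0 ≤ xs a := Finset.sum_nonneg fun i _ => sq_nonneg _

lemma norm_sq_VV {n : ℕ} (a : VV n) : ‖a‖ ^ 2 = xs a + a none ^ 2 := by
  rw [EuclideanSpace.norm_sq_eq, Fintype.sum_option]
  simp [xs, add_comm]

lemma co_cd {n : ℕ} (o : Option (Fin n)) : ContDiff ℝ (⊤ : ℕ∞) (fun a : VV n => a o) :=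
  (EuclideanSpace.proj (𝕜 := ℝ) o).contDiff

lemma st_cd : ContDiff ℝ (⊤ : ℕ∞) Real.smoothTransition := Real.smoothTransition.contDiff

lemma xs_cd {n : ℕ} : ContDiff ℝ (⊤ : ℕ∞) (xs : VV n → ℝ) :=
  ContDiff.sum fun i _ => (co_cd (some i)).pow 2

lemma gg_cd {n : ℕ} (j : Fin n) : ContDiff ℝ (⊤ : ℕ∞) (gg j) := by
  have h1 : ContDiff ℝ (⊤ : ℕ∞) (fun a : VV n => bb (xs a)) :=
    (st_cd.comp (xs_cd.sub contDiff_const)).mul (st_cd.comp (contDiff_const.sub xs_cd))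
  have h2 : ContDiff ℝ (⊤ : ℕ∞) (fun a : VV n => Real.smoothTransition (5 - a none ^ 2)) :=
    st_cd.comp (contDiff_const.sub ((co_cd none).pow 2))
  have h3 : ContDiff ℝ (⊤ : ℕ∞) (fun a : VV n => xs a + a none ^ 2 + Real.smoothTransition (1 - xs a)) :=
    (xs_cd.add ((co_cd none).pow 2)).add (st_cd.comp (contDiff_const.sub xs_cd))
  refine ((h1.mul h2).mul ((co_cd none).mul (co_cd (some j)))).mul (h3.sqrt fun a => ?_)
  have hx := xs_nonneg a
  have ht := sq_nonneg (a none)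
  have hs := Real.smoothTransition.nonneg (1 - xs a)
  rcases hx.eq_or_lt with h | h
  · have := Real.smoothTransition.pos_of_pos (x := 1 - xs a) (by linarith)
    linarith
  · linarith

lemma bb_zero {s : ℝ} (h : s ≤ 1 ∨ 4 ≤ s) : bb s = 0 := by
  unfold bb
  rcases h with h | h
  · rw [Real.smoothTransition.zero_of_nonpos (by linarith), zero_mul]
  · rw [Real.smoothTransition.zero_of_nonpos (x := 4 - s) (by linarith), mul_zero]

lemma gg_cs {n : ℕ} (j : Fin n) : HasCompactSupport (gg j) := by
  refine HasCompactSupport.of_support_subset_isCompact (isCompact_closedBall (0 : VV n) 3) ?_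
  intro a ha
  rw [mem_closedBall_zero_iff]
  have h1 : xs a ≤ 4 := by
    by_contra h
    push Not at h
    exact ha (by simp [gg, bb_zero (Or.inr h.le)])
  have h2 : a none ^ 2 ≤ 5 := by
    by_contra h
    push Not at h
    exact ha (by simp [gg, Real.smoothTransition.zero_of_nonpos (x := 5 - a none ^ 2) (by linarith)])
  have := norm_sq_VV a
  nlinarith [norm_nonneg a]

lemma gg_even {n : ℕ} (j : Fin n) (a : VV n) : gg j (-a) = gg j a := by
  simp [gg, xs]

lemma gg_zero {n : ℕ} (j : Fin n) : gg j (0 : VV n) = 0 := by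
  simp [gg]

lemma bb_cd : Continuous bb := by
  unfold bb
  have := Real.smoothTransition.continuous
  fun_prop

lemma bb_int : ∃ c : ℝ, 0 < c ∧ ∀ b : ℝ, 0 < b → ∫ r in Set.Ioi (0 : ℝ), r * bb (r ^ 2 * b ^ 2) = c / b ^ 2 := by
  have hcont : Continuous fun r : ℝ => r * bb (r ^ 2) := continuous_id.mul (bb_cd.comp (by fun_prop))
  refine ⟨∫ r in Set.Ioi (0 : ℝ), r * bb (r ^ 2), ?_, ?_⟩
  · have hcs : HasCompactSupport fun r : ℝ => r * bb (r ^ 2) := by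
      refine HasCompactSupport.of_support_subset_isCompact (isCompact_closedBall (0 : ℝ) 2) ?_
      intro r hr
      rw [mem_closedBall_zero_iff, Real.norm_eq_abs]
      by_contra h
      push Not at h
      have : 4 ≤ r ^ 2 := by rw [← sq_abs]; nlinarith
      exact hr (by simp [bb_zero (Or.inr this)])
    have hi := hcont.integrable_of_hasCompactSupport (μ := volume) hcs
    have hnn : ∀ s, 0 ≤ bb s := fun s => mul_nonneg (Real.smoothTransition.nonneg _) (Real.smoothTransition.nonneg _)
    rw [setIntegral_pos_iff_support_of_nonneg_ae _ hi.integrableOn]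
    · refine lt_of_lt_of_le ?_ (measure_mono (s := Set.Ioo 1 2) ?_)
      · simp
      · intro r hr
        have h1 : 0 < r := by linarith [hr.1]
        refine ⟨?_, h1⟩
        rw [Function.mem_support]
        refine (mul_pos h1 (mul_pos ?_ ?_)).ne'
        · exact Real.smoothTransition.pos_of_pos (by nlinarith [hr.1])
        · exact Real.smoothTransition.pos_of_pos (by nlinarith [hr.2])
    · refine (ae_restrict_iff' measurableSet_Ioi).mpr (Filter.Eventually.of_forall fun r hr => ?_)
      exact mul_nonneg (le_of_lt hr) (hnn _)
  · intro b hb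
    have h1 := integral_comp_mul_right_Ioi (fun r : ℝ => r * bb (r ^ 2)) 0 hb
    rw [zero_mul, smul_eq_mul] at h1
    have h2 : ∀ r : ℝ, r * bb (r ^ 2 * b ^ 2) = b⁻¹ * ((r * b) * bb ((r * b) ^ 2)) := by
      intro r; rw [mul_pow]; field_simp
    simp only [h2]
    rw [integral_const_mul, h1]; field_simp

lemma gg_integral : ∃ c : ℝ, 0 < c ∧ ∀ (n : ℕ) (j : Fin n) (a : VV n), a none ^ 2 ≤ xs a → xs a ≠ 0 →
    ∫ r in Set.Ioi (0 : ℝ), (r ^ 2)⁻¹ * gg j (r • a) = c * (a none * a (some j) / xs a) * ‖a‖ := by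
  obtain ⟨c, hc, h⟩ := bb_int
  refine ⟨c, hc, ?_⟩
  intro n j a hcone hne
  have hx : 0 < xs a := lt_of_le_of_ne (xs_nonneg a) hne.symm
  set b := Real.sqrt (xs a) with hb
  have hb0 : 0 < b := Real.sqrt_pos.mpr hx
  have hb2 : b ^ 2 = xs a := Real.sq_sqrt hx.le
  have e : ∀ r ∈ Set.Ioi (0 : ℝ), (r ^ 2)⁻¹ * gg j (r • a) = (a none * a (some j) * ‖a‖) * (r * bb (r ^ 2 * b ^ 2)) := by
    intro r hr
    have hr0 : (0 : ℝ) < r := hr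
    have ex : xs (r • a) = r ^ 2 * xs a := by
      simp [xs, mul_pow, Finset.mul_sum]
    have et : (r • a) none = r * a none := by simp
    have ej : (r • a) (some j) = r * a (some j) := by simp
    rw [gg, ex, et, ej, hb2]
    by_cases h1 : r ^ 2 * xs a ≤ 1 ∨ 4 ≤ r ^ 2 * xs a
    · simp [bb_zero h1]
    · push Not at h1
      have h3 : (r * a none) ^ 2 ≤ 4 := by
        have : (r * a none) ^ 2 ≤ r ^ 2 * xs a := by rw [mul_pow]; exact mul_le_mul_of_nonneg_left hcone (sq_nonneg r)
        linarith
      rw [Real.smoothTransition.one_of_one_le (x := 5 - (r * a none) ^ 2) (by linarith),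
        Real.smoothTransition.zero_of_nonpos (x := 1 - r ^ 2 * xs a) (by linarith)]
      have : r ^ 2 * xs a + (r * a none) ^ 2 + 0 = (r * ‖a‖) ^ 2 := by
        rw [mul_pow r ‖a‖, norm_sq_VV]; ring
      rw [this, Real.sqrt_sq (by positivity)]
      field_simp
  rw [setIntegral_congr_fun measurableSet_Ioi e, integral_const_mul, h b hb0, hb2]
  field_simp

end bump

/-- `Good` gives the Schatten bound. -/
lemma good_schatten {d : ℕ} {p q B : ℝ} (hpq : p.HolderConjugate q) (hB : 0 < B) {m : Fin d → Fin d → ℝ}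
    (h : Good d p q B m) (y : Matrix (Fin d) (Fin d) ℂ) :
    schattenNorm p (Matrix.of fun i k : Fin d => ((m i k : ℝ) : ℂ) * y i k) ≤ B * schattenNorm p y := by
  set z := (Matrix.of fun i k : Fin d => ((m i k : ℝ) : ℂ) * y i k) with hz
  obtain ⟨w, hw1, hw2⟩ := norming z hpq
  set t := B ^ (1 / q) with ht
  have htp : 0 < t := by positivity
  have hq := hpq.symm.pos
  have hp := hpq.pos
  have e1 : B * t ^ p = B ^ p := by
    rw [ht, ← Real.rpow_mul hB.le]
    nth_rewrite 1 [← Real.rpow_one B]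
    rw [← Real.rpow_add hB]; congr 1
    have := hpq.div_conj_eq_sub_one
    rw [show 1 / q * p = p / q by ring, this]; ring
  have e2 : (t⁻¹) ^ q * B = 1 := by
    rw [ht, Real.inv_rpow (by positivity), ← Real.rpow_mul hB.le, one_div, inv_mul_cancel₀ hpq.symm.ne_zero, Real.rpow_one,
      inv_mul_cancel₀ hB.ne']
  have h1 := h (t • y) (t⁻¹ • w)
  have h2 : ∑ i, ∑ l, m i l * ((t • y) i l * (t⁻¹ • w) l i).re = np p z := by
    rw [← hw1, tr, Matrix.trace, Complex.re_sum]
    refine Finset.sum_congr rfl fun i _ => ?_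
    rw [Matrix.diag_apply, Matrix.mul_apply, Complex.re_sum]
    refine Finset.sum_congr rfl fun l _ => ?_
    have : (t • y) i l * (t⁻¹ • w) l i = y i l * w l i := by
      simp only [Matrix.smul_apply, Complex.real_smul]
      push_cast
      have : (t : ℂ) ≠ 0 := by exact_mod_cast htp.ne'
      field_simp
    rw [this, hz, Matrix.of_apply, mul_assoc, Complex.re_ofReal_mul]
  rw [h2, np_smul _ htp.le, np_smul _ (inv_nonneg.mpr htp.le), hw2] at h1
  have h3 : B * (t ^ p * np p y / p + (t⁻¹) ^ q * np p z / q) = B ^ p * np p y / p + np p z / q := by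
    linear_combination (np p y / p) * e1 + (np p z / q) * e2
  rw [h3] at h1
  have h7 : 1 / p + 1 / q = 1 := by
    have := hpq.inv_add_inv_eq_one
    simpa [one_div] using this
  have h8 : np p z ≤ B ^ p * np p y := by
    have : np p z / p ≤ B ^ p * np p y / p := by
      have : np p z = np p z / p + np p z / q := by
        calc np p z = np p z * (1 / p + 1 / q) := by rw [h7, mul_one]
          _ = _ := by ring
      linarith
    exact (div_le_div_iff_of_pos_right hp).mp this
  have h9 := Real.rpow_le_rpow (np_nonneg p z) h8 (by positivity : 0 ≤ 1 / p)
  rw [Real.mul_rpow (by positivity) (np_nonneg p y), ← Real.rpow_mul hB.le, mul_one_div_cancel hp.ne', Real.rpow_one] at h9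
  exact h9

lemma good_swap {d : ℕ} {p q B : ℝ} {m : Fin d → Fin d → ℝ} (hm : ∀ i l, m i l = m l i) (h : Good d q p B m) : Good d p q B m := by
  intro y w
  have := h w y
  rw [Finset.sum_comm] at this
  rw [add_comm] at this
  refine le_trans (le_of_eq ?_) this
  refine Finset.sum_congr rfl fun i _ => Finset.sum_congr rfl fun l _ => ?_
  rw [hm i l, mul_comm (y i l)]

lemma good_scale {d : ℕ} {p q B c : ℝ} {m : Fin d → Fin d → ℝ} (hc : 0 < c) (h : Good d p q B m) :
    Good d p q (c * B) (fun i l => c * m i l) := by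
  intro y w
  have := mul_le_mul_of_nonneg_left (h y w) hc.le
  simp only [Finset.mul_sum] at this
  simp only [mul_assoc] at this ⊢
  exact this

noncomputable def mm {n d : ℕ} (j : Fin n) (f : (Fin n → ℝ) → ℝ) (lam : Fin d → Fin n → ℝ) (i k : Fin d) : ℝ :=
  if lam i = lam k then 0 else (f (lam i) - f (lam k)) * (lam i j - lam k j) / ∑ l, (lam i l - lam k l) ^ 2

lemma mm_symm {n d : ℕ} (j : Fin n) (f : (Fin n → ℝ) → ℝ) (lam : Fin d → Fin n → ℝ) (i k : Fin d) : mm j f lam i k = mm j f lam k i := by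
  unfold mm
  by_cases h : lam i = lam k
  · rw [if_pos h, if_pos h.symm]
  · rw [if_neg h, if_neg (Ne.symm h)]
    congr 1
    · ring
    · exact Finset.sum_congr rfl fun l _ => by ring

lemma mm_good {n : ℕ} (j : Fin n) : ∃ C : ℝ, 0 < C ∧ ∀ (d : ℕ) (f : (Fin n → ℝ) → ℝ),
    (∀ ξ ξ' : Fin n → ℝ, |f ξ - f ξ'| ≤ Real.sqrt (∑ i, (ξ i - ξ' i) ^ 2)) → ∀ (lam : Fin d → Fin n → ℝ)
    (p q B : ℝ), p.HolderConjugate q → 1 ≤ B →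
    (∀ (K : ℕ) (v : ℕ → ℝ), (∀ i, |v i| ≤ 1) → Strong d K v p B) → Good d p q (C * B) (mm j f lam) := by
  obtain ⟨C, hC, h⟩ := rep_good (gg j) (gg_cd j) (gg_cs j) (gg_even j) (gg_zero j)
  obtain ⟨c, hc, hi⟩ := gg_integral
  refine ⟨C / c, by positivity, ?_⟩
  intro d f hf lam p q B hpq hB hS
  let A : Fin d → VV n := fun i => WithLp.toLp 2 (fun o => Option.elim o (f (lam i)) (lam i))
  have h1 := good_scale (c := C / c) (by positivity) (h d A p q B hpq hB hS)
  convert h1 using 1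
  funext i l
  have an : (A i - A l) none = f (lam i) - f (lam l) := rfl
  have aj : ∀ k, (A i - A l) (some k) = lam i k - lam l k := fun k => rfl
  have ax : xs (A i - A l) = ∑ k, (lam i k - lam l k) ^ 2 := rfl
  by_cases hl : lam i = lam l
  · have : A i - A l = 0 := by simp [A, hl]
    rw [mm, if_pos hl, this]; simp
  · have hx : xs (A i - A l) ≠ 0 := by
      intro h0
      apply hl
      funext k
      have := (Finset.sum_eq_zero_iff_of_nonneg (fun i _ => sq_nonneg _)).mp (ax ▸ h0) k (Finset.mem_univ k)
      exact sub_eq_zero.mp (pow_eq_zero_iff two_ne_zero |>.mp this)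
    have hcone : (A i - A l) none ^ 2 ≤ xs (A i - A l) := by
      rw [an, ax, ← sq_abs, ← Real.le_sqrt (abs_nonneg _) (Finset.sum_nonneg fun i _ => sq_nonneg _)]
      exact hf _ _
    have hn : ‖A i - A l‖ ≠ 0 := by
      intro h0
      have := norm_sq_VV (A i - A l)
      rw [h0] at this
      have h3 := xs_nonneg (A i - A l)
      have h4 := sq_nonneg ((A i - A l) none)
      exact hx (by linarith)
    rw [hi n j _ hcone hx, mm, if_neg hl, an, aj, ax]
    rw [ax] at hx
    field_simp

lemma main_aux {n : ℕ} (j : Fin n) : ∃ C : ℝ, 0 < C ∧ ∀ (p : ℝ), 1 < p → ∀ (d : ℕ) (f : (Fin n → ℝ) → ℝ),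
    (∀ ξ ξ' : Fin n → ℝ, |f ξ - f ξ'| ≤ Real.sqrt (∑ i, (ξ i - ξ' i) ^ 2)) →
    ∀ (lam : Fin d → Fin n → ℝ) (y : Matrix (Fin d) (Fin d) ℂ),
    schattenNorm p (Matrix.of fun i k : Fin d => ((mm j f lam i k : ℝ) : ℂ) * y i k) ≤ C * (p ^ 2 / (p - 1)) * schattenNorm p y := by
  obtain ⟨C1, hC1, h1⟩ := mm_good j
  obtain ⟨C2, hC2, h2⟩ := mart_bound
  have hC20 : 0 < C2 := by linarith
  refine ⟨C1 * C2, by positivity, ?_⟩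
  intro p hp d f hf lam y
  have hpq := Real.HolderConjugate.conjExponent hp
  set q := p.conjExponent with hq
  have hsn : 0 ≤ schattenNorm p y := Real.rpow_nonneg (np_nonneg p y) _
  have hp1 : 0 < p - 1 := by linarith
  rcases le_total p 2 with hp2 | hp2
  · have hB : 1 ≤ C2 / (p - 1) := by rw [le_div_iff₀ hp1]; linarith
    have := good_schatten hpq (by positivity) (h1 d f hf lam p q _ hpq hB (h2 p hp hp2 d)) y
    refine this.trans (mul_le_mul_of_nonneg_right ?_ hsn)
    rw [mul_assoc]
    refine mul_le_mul_of_nonneg_left ?_ hC1.le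
    rw [mul_div_assoc', div_le_div_iff_of_pos_right hp1]
    exact le_mul_of_one_le_right hC20.le (by nlinarith)
  · have hqe : q - 1 = 1 / (p - 1) := by
      rw [hq, Real.conjExponent]; field_simp; ring
    have hq1 : 1 < q := hpq.symm.lt
    have hq2 : q ≤ 2 := by
      have : 1 / (p - 1) ≤ 1 := by rw [div_le_one hp1]; linarith
      linarith
    have hq0 : 0 < q - 1 := by linarith
    have hB : 1 ≤ C2 / (q - 1) := by rw [le_div_iff₀ hq0]; linarith
    have := good_schatten hpq (by positivity) (good_swap (mm_symm j f lam) (h1 d f hf lam q p _ hpq.symm hB (h2 q hq1 hq2 d))) y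
    refine this.trans (mul_le_mul_of_nonneg_right ?_ hsn)
    rw [mul_assoc]
    refine mul_le_mul_of_nonneg_left ?_ hC1.le
    rw [hqe, div_div_eq_mul_div, div_one]
    refine mul_le_mul_of_nonneg_left ?_ hC20.le
    rw [le_div_iff₀ hp1]
    nlinarith

end SMB

/-- Finite-dimensional form of Theorem 5.1 of the paper: the Schur multiplier with symbol
`φ_f·φ_j` has Schatten-`p` norm of order `p²/(p−1)`, with a constant depending only on
`n`. -/
theorem schur_multiplier_schatten_bound (n : ℕ) (hn : 1 ≤ n) (j : Fin n) :
    ∃ C : ℝ, 0 < C ∧ ∀ (p : ℝ), 1 < p → ∀ (d : ℕ), 1 ≤ d →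
      ∀ (f : (Fin n → ℝ) → ℝ),
        (∀ ξ ξ' : Fin n → ℝ, |f ξ - f ξ'| ≤ Real.sqrt (∑ i, (ξ i - ξ' i) ^ 2)) →
      ∀ (lam : Fin d → Fin n → ℝ) (y : Matrix (Fin d) (Fin d) ℂ),
        schattenNorm p
            (Matrix.of fun i k : Fin d =>
              (((if lam i = lam k then 0 else
                (f (lam i) - f (lam k)) * (lam i j - lam k j)
                  / ∑ l, (lam i l - lam k l) ^ 2) : ℝ) : ℂ) * y i k)
          ≤ C * (p ^ 2 / (p - 1)) * schattenNorm p y := by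
  obtain ⟨C, hC, h⟩ := SMB.main_aux j
  exact ⟨C, hC, fun p hp d _ f hf lam y => h p hp d f hf lam y⟩
end

section
/- Let n, m, N ≥ 1 be integers, let f : ℝⁿ → ℝ be Lipschitz with constant at most 1 (with respect to the Euclidean norm), and let B : ℝⁿ → ℝ be a C^∞ function with B(0) = 1, support contained in the closed cube [−1/(2m), 1/(2m)]ⁿ, and Lipschitz constant at most L. Define f_N : ℝⁿ → ℝ by f_N(ξ) = f(ξ) + ∑_{k ∈ ℤⁿ} ( ⌊N f(k/m)⌋/N − f(k/m) ) · B(ξ − k/m) (for each ξ at most one summand is nonzero). Then: (i) f_N(k/m) = ⌊N f(k/m)⌋/N for every k ∈ ℤⁿ, so N·f_N(k/m) ∈ ℤ; (ii) f_N is Lipschitz with constant at most 1 + L/N; (iii) f − f_N is Lipschitz with constant at most L/N. -/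
open Finset

/-- The discretization construction establishing Assumption 3 in the proof of
Theorem 5.1 of the paper. `f : ℝⁿ → ℝ` is `1`-Lipschitz for the Euclidean norm, `B` is a
smooth bump with `B(0) = 1`, support in the cube `[−1/(2m), 1/(2m)]ⁿ` and Lipschitz
constant at most `L`, and
`f_N(ξ) = f(ξ) + ∑_{k ∈ ℤⁿ} (⌊N f(k/m)⌋/N − f(k/m)) B(ξ − k/m)`.
Then (i) `f_N(k/m) = ⌊N f(k/m)⌋/N`, so `N f_N(k/m) ∈ ℤ`; (ii) `f_N` is Lipschitz with
constant at most `1 + L/N`; (iii) `f − f_N` is Lipschitz with constant at most `L/N`. -/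
theorem discretization_fN (n m N : ℕ) (hn : 1 ≤ n) (hm : 1 ≤ m) (hN : 1 ≤ N)
    (f : (Fin n → ℝ) → ℝ)
    (hf : ∀ ξ ξ' : Fin n → ℝ, |f ξ - f ξ'| ≤ Real.sqrt (∑ i, (ξ i - ξ' i) ^ 2))
    (L : ℝ) (B : (Fin n → ℝ) → ℝ)
    (hB : ContDiff ℝ (⊤ : ℕ∞) B) (hB0 : B 0 = 1)
    (hBsupp : Function.support B ⊆ {ξ : Fin n → ℝ | ∀ i, |ξ i| ≤ 1 / (2 * m)})
    (hBlip : ∀ ξ ξ' : Fin n → ℝ, |B ξ - B ξ'| ≤ L * Real.sqrt (∑ i, (ξ i - ξ' i) ^ 2))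
    (fN : (Fin n → ℝ) → ℝ)
    (hfN : ∀ ξ : Fin n → ℝ, fN ξ = f ξ + ∑' k : Fin n → ℤ,
      ((⌊(N : ℝ) * f (fun i => (k i : ℝ) / m)⌋ : ℝ) / N - f (fun i => (k i : ℝ) / m))
        * B (fun i => ξ i - (k i : ℝ) / m)) :
    -- (i)
    (∀ k : Fin n → ℤ,
      fN (fun i => (k i : ℝ) / m)
          = (⌊(N : ℝ) * f (fun i => (k i : ℝ) / m)⌋ : ℝ) / N ∧
      ∃ z : ℤ, (N : ℝ) * fN (fun i => (k i : ℝ) / m) = (z : ℝ)) ∧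
    -- (ii)
    (∀ ξ ξ' : Fin n → ℝ,
      |fN ξ - fN ξ'| ≤ (1 + L / N) * Real.sqrt (∑ i, (ξ i - ξ' i) ^ 2)) ∧
    -- (iii)
    (∀ ξ ξ' : Fin n → ℝ,
      |(f ξ - fN ξ) - (f ξ' - fN ξ')| ≤ (L / N) * Real.sqrt (∑ i, (ξ i - ξ' i) ^ 2)) := by
  have hm0 : (0:ℝ) < m := by exact_mod_cast hm
  have hN0 : (0:ℝ) < N := by exact_mod_cast hN
  obtain ⟨i0⟩ : Nonempty (Fin n) := ⟨⟨0, hn⟩⟩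
  have key0 : ∀ (η : Fin n → ℝ) (i : Fin n) (t : ℝ), 1 / (2 * m) < |t| →
      |B η| ≤ L * |η i - t| := by
    intro η i t ht
    have h0 : B (Function.update η i t) = 0 := by
      by_contra h
      have := hBsupp h i
      simp only [Function.update_self] at this
      linarith
    have h1 := hBlip η (Function.update η i t)
    rw [h0, sub_zero, Finset.sum_eq_single i] at h1
    · simpa [Real.sqrt_sq_eq_abs] using h1
    · intro j _ hj
      simp [Function.update_of_ne hj]
    · simp
  have hL : 0 ≤ L := by
    have h1 := key0 0 i0 (1 / (2 * m) + 1) (by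
      rw [abs_of_pos (by positivity)]; linarith)
    have h2 : (0:ℝ) < |(0 : Fin n → ℝ) i0 - (1 / (2 * m) + 1)| := by
      rw [abs_pos]; simp only [Pi.zero_apply, zero_sub]
      exact neg_ne_zero.mpr (by positivity)
    by_contra hneg
    push Not at hneg
    have := mul_neg_of_neg_of_pos hneg h2
    linarith [abs_nonneg (B 0)]
  have hh : (0:ℝ) < 1 / (2 * m) := by positivity
  have keyp : ∀ (η : Fin n → ℝ) (i : Fin n), B η ≠ 0 →
      |B η| ≤ L * (1 / (2 * m) - η i) := by
    intro η i hη
    have hs := (abs_le.mp (hBsupp hη i)).2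
    apply le_of_forall_pos_le_add
    intro e he
    have h1 := key0 η i (1 / (2 * m) + e / (L + 1)) (by
      rw [abs_of_pos (by positivity)]
      have : 0 < e / (L + 1) := by positivity
      linarith)
    have h3 : 0 < e / (L + 1) := by positivity
    rw [abs_of_nonpos (a := η i - (1 / (2 * m) + e / (L + 1))) (by linarith)] at h1
    have h2 : L * (e / (L + 1)) ≤ e := by
      rw [← mul_div_assoc, div_le_iff₀ (by linarith)]; nlinarith
    nlinarith
  have keym : ∀ (η : Fin n → ℝ) (i : Fin n), B η ≠ 0 →
      |B η| ≤ L * (1 / (2 * m) + η i) := by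
    intro η i hη
    have hs := (abs_le.mp (hBsupp hη i)).1
    apply le_of_forall_pos_le_add
    intro e he
    have h1 := key0 η i (-(1 / (2 * m) + e / (L + 1))) (by
      rw [abs_neg, abs_of_pos (by positivity)]
      have : 0 < e / (L + 1) := by positivity
      linarith)
    have h3 : 0 < e / (L + 1) := by positivity
    rw [abs_of_nonneg (a := η i - -(1 / (2 * m) + e / (L + 1))) (by linarith)] at h1
    have h2 : L * (e / (L + 1)) ≤ e := by
      rw [← mul_div_assoc, div_le_iff₀ (by linarith)]; nlinarith
    nlinarith
  have coord : ∀ (ξ ξ' : Fin n → ℝ) (i : Fin n),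
      |ξ i - ξ' i| ≤ Real.sqrt (∑ i, (ξ i - ξ' i) ^ 2) := by
    intro ξ ξ' i
    apply Real.abs_le_sqrt
    exact Finset.single_le_sum (f := fun i => (ξ i - ξ' i) ^ 2)
      (fun j _ => sq_nonneg _) (Finset.mem_univ i)
  have dsymm : ∀ (ξ ξ' : Fin n → ℝ),
      Real.sqrt (∑ i, (ξ i - ξ' i) ^ 2) = Real.sqrt (∑ i, (ξ' i - ξ i) ^ 2) := by
    intro ξ ξ'
    congr 1
    exact Finset.sum_congr rfl (fun i _ => by ring)
  have pair0 : ∀ (ξ ξ' : Fin n → ℝ) (k k' : Fin n → ℤ) (i : Fin n), k i < k' i →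
      B (fun i => ξ i - (k i : ℝ) / m) ≠ 0 → B (fun i => ξ' i - (k' i : ℝ) / m) ≠ 0 →
      |B (fun i => ξ i - (k i : ℝ) / m)| + |B (fun i => ξ' i - (k' i : ℝ) / m)|
        ≤ L * Real.sqrt (∑ i, (ξ i - ξ' i) ^ 2) := by
    intro ξ ξ' k k' i hi h1 h2
    have e1 := keyp _ i h1
    have e2 := keym _ i h2
    have hk : (k i : ℝ) + 1 ≤ k' i := by exact_mod_cast hi
    have hk2 : (k i : ℝ) / m + 1 / m ≤ k' i / m := by
      rw [← add_div]; gcongr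
    have h4 : (1:ℝ) / m = 2 * (1 / (2 * m)) := by field_simp
    have h5 := (abs_le.mp (coord ξ ξ' i)).1
    have h6 : L * (ξ' i - ξ i + (k i : ℝ) / m + 1 / m - k' i / m)
        ≤ L * Real.sqrt (∑ i, (ξ i - ξ' i) ^ 2) :=
      mul_le_mul_of_nonneg_left (by linarith) hL
    rw [h4] at h6
    linarith
  have pair : ∀ (ξ ξ' : Fin n → ℝ) (k k' : Fin n → ℤ), k ≠ k' →
      B (fun i => ξ i - (k i : ℝ) / m) ≠ 0 → B (fun i => ξ' i - (k' i : ℝ) / m) ≠ 0 →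
      |B (fun i => ξ i - (k i : ℝ) / m)| + |B (fun i => ξ' i - (k' i : ℝ) / m)|
        ≤ L * Real.sqrt (∑ i, (ξ i - ξ' i) ^ 2) := by
    intro ξ ξ' k k' hk h1 h2
    obtain ⟨i, hi⟩ := Function.ne_iff.mp hk
    rcases lt_or_gt_of_ne hi with h | h
    · exact pair0 ξ ξ' k k' i h h1 h2
    · rw [add_comm, dsymm]
      exact pair0 ξ' ξ k' k i h h2 h1
  have uniq : ∀ (ξ : Fin n → ℝ) (k : Fin n → ℤ), B (fun i => ξ i - (k i : ℝ) / m) ≠ 0 →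
      ∀ j, j ≠ k → B (fun i => ξ i - (j i : ℝ) / m) = 0 := by
    intro ξ k hk j hj
    by_contra h
    have h1 := pair ξ ξ j k hj h hk
    simp only [sub_self, ne_eq, OfNat.ofNat_ne_zero, not_false_eq_true, zero_pow,
      Finset.sum_const_zero, Real.sqrt_zero, mul_zero] at h1
    linarith [abs_pos.mpr hk, abs_pos.mpr h]
  set c : (Fin n → ℤ) → ℝ := fun k =>
    (⌊(N : ℝ) * f (fun i => (k i : ℝ) / m)⌋ : ℝ) / N - f (fun i => (k i : ℝ) / m) with hc
  have hcb : ∀ k, |c k| ≤ 1 / N := by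
    intro k
    have h1 := Int.floor_le ((N : ℝ) * f (fun i => (k i : ℝ) / m))
    have h2 := Int.lt_floor_add_one ((N : ℝ) * f (fun i => (k i : ℝ) / m))
    have h3 : c k = (⌊(N : ℝ) * f (fun i => (k i : ℝ) / m)⌋
        - (N : ℝ) * f (fun i => (k i : ℝ) / m)) / N := by
      simp only [hc]; field_simp
    rw [h3, abs_div, abs_of_pos hN0]
    gcongr
    rw [abs_le]; constructor <;> linarith
  have hfN1 : ∀ (ξ : Fin n → ℝ) (k : Fin n → ℤ),
      (∀ j, j ≠ k → B (fun i => ξ i - (j i : ℝ) / m) = 0) →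
      fN ξ = f ξ + c k * B (fun i => ξ i - (k i : ℝ) / m) := by
    intro ξ k h
    rw [hfN, tsum_eq_single k]
    intro j hj
    rw [h j hj, mul_zero]
  have ex : ∀ ξ : Fin n → ℝ, (∀ j : Fin n → ℤ, B (fun i => ξ i - (j i : ℝ) / m) = 0) ∨
      ∃ k : Fin n → ℤ, B (fun i => ξ i - (k i : ℝ) / m) ≠ 0 := by
    intro ξ
    by_contra! h
    obtain ⟨⟨j, hj⟩, h2⟩ := h
    exact hj (h2 j)
  have same : ∀ (ξ ξ' : Fin n → ℝ) (k : Fin n → ℤ),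
      (∀ j, j ≠ k → B (fun i => ξ i - (j i : ℝ) / m) = 0) →
      (∀ j, j ≠ k → B (fun i => ξ' i - (j i : ℝ) / m) = 0) →
      |(f ξ - fN ξ) - (f ξ' - fN ξ')| ≤ (L / N) * Real.sqrt (∑ i, (ξ i - ξ' i) ^ 2) := by
    intro ξ ξ' k h h'
    rw [hfN1 ξ k h, hfN1 ξ' k h']
    have h1 := hBlip (fun i => ξ i - (k i : ℝ) / m) (fun i => ξ' i - (k i : ℝ) / m)
    simp only [sub_sub_sub_cancel_right] at h1
    rw [show ∀ a b x y z : ℝ, (a - (a + x * y)) - (b - (b + x * z)) = -(x * (y - z)) by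
      intros; ring, abs_neg, abs_mul]
    calc _ ≤ 1 / N * (L * Real.sqrt (∑ i, (ξ i - ξ' i) ^ 2)) :=
          mul_le_mul (hcb k) h1 (abs_nonneg _) (by positivity)
      _ = _ := by ring
  have iii : ∀ ξ ξ' : Fin n → ℝ,
      |(f ξ - fN ξ) - (f ξ' - fN ξ')| ≤ (L / N) * Real.sqrt (∑ i, (ξ i - ξ' i) ^ 2) := by
    intro ξ ξ'
    rcases ex ξ with h | ⟨k, hk⟩ <;> rcases ex ξ' with h' | ⟨k', hk'⟩
    · exact same ξ ξ' 0 (fun j _ => h j) (fun j _ => h' j)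
    · exact same ξ ξ' k' (fun j _ => h j) (uniq ξ' k' hk')
    · exact same ξ ξ' k (uniq ξ k hk) (fun j _ => h' j)
    · by_cases e : k = k'
      · subst e
        exact same ξ ξ' k (uniq ξ k hk) (uniq ξ' k hk')
      · have h1 := pair ξ ξ' k k' e hk hk'
        rw [hfN1 ξ k (uniq ξ k hk), hfN1 ξ' k' (uniq ξ' k' hk')]
        rw [show ∀ a b x y z w : ℝ, (a - (a + x * y)) - (b - (b + z * w)) = z * w - x * y by
          intros; ring]
        refine (abs_sub _ _).trans ?_
        rw [abs_mul, abs_mul]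
        have a1 := mul_le_mul_of_nonneg_right (hcb k)
          (abs_nonneg (B (fun i => ξ i - (k i : ℝ) / m)))
        have a2 := mul_le_mul_of_nonneg_right (hcb k')
          (abs_nonneg (B (fun i => ξ' i - (k' i : ℝ) / m)))
        have a3 := mul_le_mul_of_nonneg_left h1 (show (0:ℝ) ≤ 1 / N by positivity)
        have a4 : 1 / N * (L * Real.sqrt (∑ i, (ξ i - ξ' i) ^ 2))
          = (L / N) * Real.sqrt (∑ i, (ξ i - ξ' i) ^ 2) := by ring
        linarith
  refine ⟨?_, ?_, iii⟩
  · intro k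
    have hz : B (fun i => (fun i => (k i : ℝ) / m) i - (k i : ℝ) / m) = 1 := by
      simp only [sub_self]; exact hB0
    have h1 : fN (fun i => (k i : ℝ) / m)
          = (⌊(N : ℝ) * f (fun i => (k i : ℝ) / m)⌋ : ℝ) / N := by
      rw [hfN1 _ k (uniq _ k (by rw [hz]; exact one_ne_zero)), hz]
      simp only [hc]; ring
    refine ⟨h1, ⌊(N : ℝ) * f (fun i => (k i : ℝ) / m)⌋, ?_⟩
    rw [h1]; field_simp
  · intro ξ ξ'
    have h1 := abs_le.mp (iii ξ ξ')
    have h2 := abs_le.mp (hf ξ ξ')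
    rw [abs_le, add_mul, one_mul]
    constructor <;> linarith [h1.1, h1.2, h2.1, h2.2]
end
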